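/- arXiv:1007.4932 — 6 statements merged into one kernel-verified Lean document; each statement's English description precedes it below -/
import Mathlib

section
/- Let d ∈ ℕ, let 0 < a and let α : ℝ → [a,2] be Lebesgue measurable, and let f₁,…,f_d ∈ F_α. Then the function φ(θ₁,…,θ_d) = exp( − ∫_ℝ |Σ_{j=1}^d θ_j f_j(x)|^{α(x)} dx ) is the characteristic function of a probability measure on ℝ^d; that is, there exists a probability measure μ on ℝ^d such that ∫ exp(i⟨θ,y⟩) dμ(y) = exp( − ∫_ℝ |Σ_{j=1}^d θ_j f_j(x)|^{α(x)} dx ) for all θ = (θ₁,…,θ_d) ∈ ℝ^d. -/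
/-! The function `exp (-ψ)`, with `ψ(θ) = ∫ |∑ θ_j f_j(x)| ^ α(x) dx`, is a characteristic function
because `ψ` is, up to a limit, an integral of the Lévy–Khintchine exponents `1 - cos ⟨y, θ⟩`.

With `F(x) = (f_1(x), …, f_d(x))` the integrand is `|⟨F(x), θ⟩| ^ α(x)`. For `0 < β < 2`,
`|u| ^ β = K(β)⁻¹ ∫₀^∞ (1 - cos (u r)) r^(-1-β) dr` (`stable_scale`), so on `{α < 2}` the exponent is
the integral of `1 - cos ⟨r F(x), θ⟩` against a σ-finite measure in `(x, r)`. On `{α = 2}`, `u ^ 2` is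
the limit of `2 m ^ 2 (1 - cos (u / m))` (`gaussian_approx`). In both cases `ψ` is a limit of integrals
of `1 - cos ⟨g, θ⟩` against finite measures, and those are exponents of symmetric compound Poisson
laws (`isCharExponent_integral_one_sub_cos`).

Exponents add up under convolution (`IsCharExponent.add`), and by Lévy's continuity theorem together
with Prokhorov's theorem (`exists_charFun_eq_of_tendsto`) they are stable under pointwise limits that
are continuous at `0`. Continuity of `ψ` at `0` and the convergence of all integrals follow by
domination from the integrability of `‖F(x)‖ ^ α(x)` (`integrable_norm_rpow`), which is where the
hypothesis `f_j ∈ F_α` enters. -/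

open MeasureTheory Filter Set Topology ProbabilityTheory BoundedContinuousFunction

noncomputable section

/-- Membership in `F_α`: `f` is measurable and either a.e. zero or there is a (unique)
`λ > 0` with `∫ |f(x)/λ|^{α(x)} dx = 1`. -/
def MemFalpha (α f : ℝ → ℝ) : Prop :=
  Measurable f ∧ (f =ᵐ[volume] (0 : ℝ → ℝ) ∨ ∃ lam > (0:ℝ), ∫ x : ℝ, |f x / lam| ^ α x = 1)

/-- The quasinorm `‖f‖_α`, the unique `λ > 0` with `∫ |f(x)/λ|^{α(x)} dx = 1`
(and `0` if no such `λ` exists, e.g. if `f = 0` a.e.). -/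
def alphaNorm (α f : ℝ → ℝ) : ℝ :=
  sInf {lam : ℝ | 0 < lam ∧ ∫ x : ℝ, |f x / lam| ^ α x = 1}

/-- `|s|^{a,b} = max{|s|^a, |s|^b}`. -/
def pab (a b s : ℝ) : ℝ := max (|s| ^ a) (|s| ^ b)

/-- Membership in `F_{a,b}`: measurable with `∫ |f(x)|^{a,b} dx < ∞`. -/
def MemFab (a b : ℝ) (f : ℝ → ℝ) : Prop :=
  Measurable f ∧ Integrable (fun x : ℝ => pab a b (f x))

/-- The norm `‖f‖_p = (∫ |f(x)|^p dx)^{1/p}`. -/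
def pNorm (p : ℝ) (f : ℝ → ℝ) : ℝ := (∫ x : ℝ, |f x| ^ p) ^ (1 / p)

/-- Membership in `E₀`: Lebesgue measurable with finite Lebesgue measure. -/
def MemE0 (A : Set ℝ) : Prop := MeasurableSet A ∧ volume A < ⊤

/-! ### Characteristic exponents -/

/-- `ψ` is a characteristic exponent if `exp (-ψ)` is the characteristic function of a probability
measure. Complex values are allowed, so that non-symmetric measures are covered as well. -/
def IsCharExponent {E : Type*} [NormedAddCommGroup E] [InnerProductSpace ℝ E]
    [MeasurableSpace E] (ψ : E → ℂ) : Prop :=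
  ∃ μ : Measure E, IsProbabilityMeasure μ ∧ ∀ t, charFun μ t = Complex.exp (-ψ t)

section Exponents

variable {E : Type*} [NormedAddCommGroup E] [InnerProductSpace ℝ E] [FiniteDimensional ℝ E]
  [MeasurableSpace E] [BorelSpace E]

/-- Lévy's continuity theorem, existence part: a pointwise limit of characteristic functions that
is continuous at `0` is a characteristic function. The sequence is tight, so by Prokhorov's theorem
it has a weak limit point, whose characteristic function has to be the pointwise limit. -/
theorem exists_charFun_eq_of_tendsto (μ : ℕ → Measure E) [hμ : ∀ n, IsProbabilityMeasure (μ n)]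
    {φ : E → ℂ} (hφ : ContinuousAt φ 0)
    (h : ∀ t, Tendsto (fun n => charFun (μ n) t) atTop (𝓝 (φ t))) :
    ∃ ν : Measure E, IsProbabilityMeasure ν ∧ ∀ t, charFun ν t = φ t := by
  have htight := isTightMeasureSet_of_tendsto_charFun hφ h
  let P : ℕ → ProbabilityMeasure E := fun n => ⟨μ n, hμ n⟩
  have hcomp : IsCompact (closure (Set.range P)) := by
    apply isCompact_closure_of_isTightMeasureSet
    convert htight using 1
    ext m
    constructor
    · rintro ⟨_, ⟨n, rfl⟩, rfl⟩
      exact ⟨n, rfl⟩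
    · rintro ⟨n, rfl⟩
      exact ⟨P n, ⟨n, rfl⟩, rfl⟩
  obtain ⟨ν, -, hν⟩ := hcomp.ultrafilter_le_nhds ((Ultrafilter.of (atTop : Filter ℕ)).map P)
    (.trans (by simp) (monotone_principal subset_closure))
  refine ⟨ν, inferInstance, fun t => ?_⟩
  have hν' : Tendsto P (Ultrafilter.of (atTop : Filter ℕ)) (𝓝 ν) := hν
  rw [ProbabilityMeasure.tendsto_iff_forall_integral_rclike_tendsto ℂ] at hν'
  have h1 := hν' (innerProbChar t)
  simp_rw [← charFun_eq_integral_innerProbChar] at h1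
  exact tendsto_nhds_unique h1 ((h t).mono_left (Ultrafilter.of_le _))

theorem IsCharExponent.of_tendsto {ψ : ℕ → E → ℂ} {Ψ : E → ℂ} (hψ : ∀ n, IsCharExponent (ψ n))
    (hΨ : ContinuousAt Ψ 0) (h : ∀ t, Tendsto (fun n => ψ n t) atTop (𝓝 (Ψ t))) :
    IsCharExponent Ψ := by
  choose μ hμ hch using hψ
  refine exists_charFun_eq_of_tendsto μ hΨ.neg.cexp fun t => ?_
  simp_rw [hch]
  exact (h t).neg.cexp

theorem IsCharExponent.add {ψ₁ ψ₂ : E → ℂ} (h₁ : IsCharExponent ψ₁)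
    (h₂ : IsCharExponent ψ₂) : IsCharExponent (fun t => ψ₁ t + ψ₂ t) := by
  obtain ⟨μ, hμ, h⟩ := h₁
  obtain ⟨ν, hν, h'⟩ := h₂
  refine ⟨μ ∗ ν, inferInstance, fun t => ?_⟩
  rw [charFun_conv, h, h', ← Complex.exp_add]
  ring_nf

theorem exists_charFun_eq_pow (μ : Measure E) [IsProbabilityMeasure μ] (n : ℕ) :
    ∃ ν : Measure E, IsProbabilityMeasure ν ∧ ∀ t, charFun ν t = charFun μ t ^ n := by
  induction n with
  | zero => exact ⟨Measure.dirac 0, inferInstance, fun t => by simp [charFun_dirac]⟩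
  | succ n ih =>
    obtain ⟨ν, hν, h⟩ := ih
    exact ⟨ν ∗ μ, inferInstance, fun t => by rw [charFun_conv, h, pow_succ]⟩

/-- The compound Poisson law with finite Lévy measure `m`. Its characteristic function
`exp (charFun m t - l)`, with `l` the total mass of `m`, is the limit of
`(1 + (charFun m t - l) / n) ^ n`; for `n ≥ l` this is the characteristic function of the `n`-fold
convolution power of the probability measure `(1 - l / n) δ₀ + m / n`. -/
theorem isCharExponent_compoundPoisson (m : Measure E) [IsFiniteMeasure m] :
    IsCharExponent (fun t => (m.real univ : ℂ) - charFun m t) := by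
  set l := m.real univ with hl
  have hl0 : 0 ≤ l := measureReal_nonneg
  obtain ⟨N, hN⟩ := exists_nat_gt l
  have hk (n : ℕ) : (0 : ℝ) < (n + N : ℕ) ∧ l / (n + N : ℕ) ≤ 1 := by
    have : (N : ℝ) ≤ (n + N : ℕ) := by push_cast; linarith [(n.cast_nonneg : (0 : ℝ) ≤ n)]
    have h0 : (0 : ℝ) < (n + N : ℕ) := by linarith
    exact ⟨h0, (div_le_one h0).2 (by linarith)⟩
  let ρ : ℕ → Measure E := fun n =>
    ENNReal.ofReal (1 - l / (n + N : ℕ)) • Measure.dirac 0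
      + ENNReal.ofReal (1 / (n + N : ℕ)) • m
  have hρ (n : ℕ) : IsProbabilityMeasure (ρ n) := by
    obtain ⟨h0, h1⟩ := hk n
    constructor
    have hm : m univ = ENNReal.ofReal l := by simp [hl]
    simp only [ρ, Measure.add_apply, Measure.smul_apply, smul_eq_mul, hm, measure_univ, mul_one]
    rw [← ENNReal.ofReal_mul (by positivity), ← ENNReal.ofReal_add (by linarith) (by positivity)]
    rw [← ENNReal.ofReal_one]
    congr 1
    ring
  have hch (n : ℕ) (t : E) : charFun (ρ n) t
      = 1 + (charFun m t - l) / (n + N : ℕ) := by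
    obtain ⟨h0, h1⟩ := hk n
    have hi (m' : Measure E) [IsFiniteMeasure m'] : Integrable (innerProbChar t) m' :=
      BoundedContinuousFunction.integrable _ _
    simp only [charFun_eq_integral_innerProbChar, ρ]
    rw [integral_add_measure ((hi _).smul_measure (by simp)) ((hi _).smul_measure (by simp)),
      integral_smul_measure, integral_smul_measure, integral_dirac,
      ENNReal.toReal_ofReal (by linarith), ENNReal.toReal_ofReal (by positivity)]
    simp [innerProbChar_apply]
    ring
  choose μ hμ hμch using fun n => exists_charFun_eq_pow (ρ n) (n + N)
  refine exists_charFun_eq_of_tendsto μ ?_ fun t => ?_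
  · fun_prop
  · simp_rw [hμch, hch, neg_sub]
    exact (tendsto_add_atTop_iff_nat N
      (f := fun n : ℕ => (1 + (charFun m t - l) / (n : ℂ)) ^ n)).2
      (Complex.tendsto_one_add_div_pow_exp (charFun m t - l))

/-- The symmetric compound Poisson law whose Lévy measure is the symmetrization of the image of `ν`
under `g`. -/
theorem isCharExponent_integral_one_sub_cos {X : Type*} [MeasurableSpace X] (ν : Measure X)
    [IsFiniteMeasure ν] {g : X → E} (hg : Measurable g) :
    IsCharExponent (fun t => ((∫ x, (1 - Real.cos (inner ℝ (g x) t)) ∂ν : ℝ) : ℂ)) := by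
  let ν' : Measure X := (2⁻¹ : NNReal) • ν
  have key := (isCharExponent_compoundPoisson (ν'.map g)).add
    (isCharExponent_compoundPoisson (ν'.map (fun x => -g x)))
  convert key using 2 with t
  have hg' : Measurable fun x => -g x := hg.neg
  have hc : Integrable (fun x => Real.cos (inner ℝ (g x) t)) ν :=
    Integrable.of_bound (C := 1) (by fun_prop) (by simp [Real.abs_cos_le_one])
  have he (s : ℂ) (hs : s.re = 0) :
      Integrable (fun x => Complex.exp ((inner ℝ (g x) t : ℝ) * s)) ν' :=
    Integrable.of_bound (C := 1) (by fun_prop) (by simp [Complex.norm_exp, hs])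
  have hsum : charFun (ν'.map g) t + charFun (ν'.map (fun x => -g x)) t
      = ((∫ x, Real.cos (inner ℝ (g x) t) ∂ν : ℝ) : ℂ) := by
    rw [charFun_apply, charFun_apply, integral_map hg.aemeasurable (by fun_prop),
      integral_map hg'.aemeasurable (by fun_prop)]
    simp only [inner_neg_left, Complex.ofReal_neg, neg_mul]
    rw [← integral_add (he _ (by simp)) (by simpa using he (-Complex.I) (by simp)),
      ← integral_complex_ofReal]
    simp only [ν']
    rw [integral_smul_nnreal_measure, NNReal.smul_def, ← integral_smul]
    congr 1 with x
    simp [Complex.cos]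
    ring
  have hm1 : (ν'.map g).real univ = ν.real univ / 2 := by
    simp [ν', measureReal_def, Measure.map_apply hg MeasurableSet.univ, ENNReal.toReal_mul]
    ring
  have hm2 : (ν'.map fun x => -g x).real univ = ν.real univ / 2 := by
    simp [ν', measureReal_def, Measure.map_apply hg' MeasurableSet.univ, ENNReal.toReal_mul]
    ring
  rw [integral_sub (integrable_const _) hc, hm1, hm2]
  simp only [integral_const, smul_eq_mul, mul_one]
  push_cast
  linear_combination hsum

/-! ### The power function as a Lévy–Khintchine integral -/

/-- The constant `K(β) = ∫₀^∞ (1 - cos r) r^(-1-β) dr`, so that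
`|u| ^ β = K(β)⁻¹ ∫₀^∞ (1 - cos (u r)) r^(-1-β) dr` for `0 < β < 2`. Outside this range the
integral diverges and the value is the junk value `0`. -/
def stableConst (β : ℝ) : ℝ := ∫ r in Ioi (0 : ℝ), (1 - Real.cos r) * r ^ (-1 - β)

theorem integrableOn_stable {β : ℝ} (h0 : 0 < β) (h2 : β < 2) :
    IntegrableOn (fun r : ℝ => (1 - Real.cos r) * r ^ (-1 - β)) (Ioi 0) := by
  rw [← Ioc_union_Ioi_eq_Ioi (zero_le_one' ℝ), integrableOn_union]
  have hm : Measurable fun r : ℝ => (1 - Real.cos r) * r ^ (-1 - β) := by fun_prop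
  constructor
  · have hi : IntegrableOn (fun r : ℝ => r ^ (1 - β)) (Ioc 0 1) := by
      have := (intervalIntegral.intervalIntegrable_rpow' (a := 0) (b := 1) (r := 1 - β)
        (by linarith))
      rwa [intervalIntegrable_iff_integrableOn_Ioc_of_le zero_le_one] at this
    refine hi.mono' hm.aestronglyMeasurable ?_
    filter_upwards [ae_restrict_mem measurableSet_Ioc] with r hr
    have hr0 : 0 < r := hr.1
    have h1 := Real.one_sub_sq_div_two_le_cos (x := r)
    have h3 := Real.cos_le_one r
    have hp := Real.rpow_pos_of_pos hr0 (-1 - β)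
    rw [Real.norm_of_nonneg (by nlinarith)]
    calc (1 - Real.cos r) * r ^ (-1 - β) ≤ r ^ 2 * r ^ (-1 - β) := by
          gcongr; nlinarith
      _ = r ^ (1 - β) := by
          rw [← Real.rpow_natCast, ← Real.rpow_add hr0]; congr 1; push_cast; ring
  · have hi : IntegrableOn (fun r : ℝ => 2 * r ^ (-1 - β)) (Ioi 1) :=
      (integrableOn_Ioi_rpow_of_lt (by linarith) one_pos).const_mul 2
    refine hi.mono' hm.aestronglyMeasurable ?_
    filter_upwards [ae_restrict_mem measurableSet_Ioi] with r hr
    have hr0 : 0 < r := one_pos.trans hr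
    have h1 := Real.neg_one_le_cos r
    have h3 := Real.cos_le_one r
    have hp := Real.rpow_pos_of_pos hr0 (-1 - β)
    rw [Real.norm_of_nonneg (by nlinarith)]
    gcongr
    linarith

theorem stableConst_pos {β : ℝ} (h0 : 0 < β) (h2 : β < 2) : 0 < stableConst β := by
  unfold stableConst
  rw [setIntegral_pos_iff_support_of_nonneg_ae _ (integrableOn_stable h0 h2)]
  · refine lt_of_lt_of_le ?_ (measure_mono (s := Ioo 0 1) ?_)
    · simp
    · intro r hr
      refine ⟨?_, hr.1⟩
      have h1 : Real.cos r < 1 := by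
        have := Real.cos_lt_cos_of_nonneg_of_le_pi_div_two le_rfl
          (by linarith [hr.2, Real.pi_gt_three]) hr.1
        simpa using this
      have hp := Real.rpow_pos_of_pos hr.1 (-1 - β)
      exact (mul_pos (by linarith) hp).ne'
  · filter_upwards [ae_restrict_mem measurableSet_Ioi] with r hr
    have h3 := Real.cos_le_one r
    have hp := Real.rpow_pos_of_pos hr (-1 - β)
    exact mul_nonneg (by linarith) hp.le

theorem measurable_stableConst : Measurable stableConst := by
  have : Measurable (Function.uncurry fun (β r : ℝ) => (1 - Real.cos r) * r ^ (-1 - β)) := by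
    unfold Function.uncurry
    fun_prop
  exact this.stronglyMeasurable.integral_prod_right.measurable

/-- The Lévy–Khintchine representation of `|u| ^ β`, obtained by substituting `s = |u| r`. -/
theorem stable_scale {β u : ℝ} (h0 : 0 < β) (h2 : β < 2) :
    IntegrableOn (fun r : ℝ => (1 - Real.cos (u * r)) * r ^ (-1 - β)) (Ioi 0) ∧
    ∫ r in Ioi (0 : ℝ), (1 - Real.cos (u * r)) * r ^ (-1 - β) = |u| ^ β * stableConst β := by
  rcases eq_or_ne u 0 with rfl | hu
  · simp [h0.ne']
  have hu' : 0 < |u| := abs_pos.2 hu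
  have heq : EqOn (fun r : ℝ => (1 - Real.cos (u * r)) * r ^ (-1 - β))
      (fun r => |u| ^ (1 + β) * ((fun s => (1 - Real.cos s) * s ^ (-1 - β)) (|u| * r)))
      (Ioi 0) := by
    intro r hr
    have hr0 : (0 : ℝ) < r := hr
    have h1 : Real.cos (u * r) = Real.cos (|u| * r) := by
      rw [← Real.cos_abs (u * r), abs_mul, abs_of_pos hr0]
    have h2 : |u| ^ (1 + β) * |u| ^ (-1 - β) = 1 := by
      rw [← Real.rpow_add hu']; ring_nf; simp
    simp only [h1, Real.mul_rpow hu'.le hr0.le]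
    linear_combination (-(1 - Real.cos (|u| * r)) * r ^ (-1 - β)) * h2
  constructor
  · rw [integrableOn_congr_fun heq measurableSet_Ioi]
    refine Integrable.const_mul ?_ _
    have := (integrableOn_Ioi_comp_mul_left_iff
      (fun s : ℝ => (1 - Real.cos s) * s ^ (-1 - β)) 0 hu').2
      (by simpa using integrableOn_stable h0 h2)
    exact this
  · rw [setIntegral_congr_fun measurableSet_Ioi heq, integral_const_mul,
      integral_comp_mul_left_Ioi (fun s : ℝ => (1 - Real.cos s) * s ^ (-1 - β)) 0 hu']
    rw [mul_zero, smul_eq_mul, ← mul_assoc, ← Real.rpow_neg_one, ← Real.rpow_add hu']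
    rw [stableConst]
    ring_nf

theorem rpow_le_max_sq {c β : ℝ} (hc : 0 ≤ c) (h0 : 0 < β) (h2 : β ≤ 2) :
    c ^ β ≤ max 1 c ^ 2 := by
  calc c ^ β ≤ max 1 c ^ β := Real.rpow_le_rpow hc (le_max_right _ _) h0.le
    _ ≤ max 1 c ^ (2 : ℝ) := Real.rpow_le_rpow_of_exponent_le (le_max_left _ _) h2
    _ = _ := by norm_cast

/-! ### Integrating the exponents over the line -/

/-- The part of the exponent where `α < 2`. It equals `∫ (1 - cos ⟨r F(x), t⟩) dν(x, r)` for the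
σ-finite measure `dν = K(α(x))⁻¹ r^(-1-α(x)) dr dx` on `A × (0, ∞)`. Restricting `ν` to an
exhausting sequence of sets of finite measure yields compound Poisson exponents converging to it. -/
theorem isCharExponent_lt_two {α : ℝ → ℝ} (hα : Measurable α) {A : Set ℝ} (hA : MeasurableSet A)
    (h0 : ∀ x ∈ A, 0 < α x)
    (h2 : ∀ x ∈ A, α x < 2) {F : ℝ → E} (hF : Measurable F)
    (hint : ∀ t, IntegrableOn (fun x => |inner ℝ (F x) t| ^ α x) A)
    (hcont : ContinuousAt (fun t => ∫ x in A, |inner ℝ (F x) t| ^ α x) 0) :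
    IsCharExponent (fun t => ((∫ x in A, |inner ℝ (F x) t| ^ α x : ℝ) : ℂ)) := by
  let P : Measure (ℝ × ℝ) := (volume.restrict A).prod (volume.restrict (Ioi 0))
  let w : ℝ × ℝ → ℝ := fun p => (stableConst (α p.1))⁻¹ * p.2 ^ (-1 - α p.1)
  have hw : Measurable w := by
    have := measurable_stableConst
    fun_prop
  let ν : Measure (ℝ × ℝ) := P.withDensity fun p => ENNReal.ofReal (w p)
  let g : ℝ × ℝ → E := fun p => p.2 • F p.1
  have hg : Measurable g := by fun_prop
  have hprod : ∀ᵐ p ∂P, p.1 ∈ A ∧ p.2 ∈ Ioi (0:ℝ) := by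
    simp only [P, Measure.prod_restrict]
    exact ae_restrict_mem (hA.prod measurableSet_Ioi)
  have hwp : ∀ᵐ p ∂P, 0 ≤ w p := by
    filter_upwards [hprod] with p hp
    exact mul_nonneg (inv_nonneg.2 (stableConst_pos (h0 _ hp.1) (h2 _ hp.1)).le)
      (Real.rpow_nonneg (le_of_lt hp.2) _)
  have hval (t : E) (p : ℝ × ℝ) : w p * (1 - Real.cos (inner ℝ (g p) t))
      = (stableConst (α p.1))⁻¹ *
        ((1 - Real.cos (inner ℝ (F p.1) t * p.2)) * p.2 ^ (-1 - α p.1)) := by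
    simp only [w, g, real_inner_smul_left, mul_comm p.2 (inner ℝ (F p.1) t)]
    ring
  have hfib (t : E) (x : ℝ) (hx : x ∈ A) :
      ∫ r in Ioi (0:ℝ), w (x, r) * (1 - Real.cos (inner ℝ (g (x, r)) t))
        = |inner ℝ (F x) t| ^ α x := by
    simp only [hval]
    rw [integral_const_mul, (stable_scale (h0 x hx) (h2 x hx)).2, mul_comm, mul_assoc,
      mul_inv_cancel₀ (stableConst_pos (h0 x hx) (h2 x hx)).ne', mul_one]
  have hPint (t : E) : Integrable (fun p => w p * (1 - Real.cos (inner ℝ (g p) t))) P := by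
    rw [integrable_prod_iff (by fun_prop)]
    constructor
    · filter_upwards [ae_restrict_mem hA] with x hx
      simp only [hval]
      exact (stable_scale (h0 x hx) (h2 x hx)).1.const_mul _
    · refine (hint t).congr ?_
      filter_upwards [ae_restrict_mem hA] with x hx
      rw [← hfib t x hx]
      refine setIntegral_congr_fun measurableSet_Ioi fun r hr => ?_
      refine (Real.norm_of_nonneg (mul_nonneg ?_
        (by linarith [Real.cos_le_one (inner ℝ (g (x, r)) t)]))).symm
      exact mul_nonneg (inv_nonneg.2 (stableConst_pos (h0 _ hx) (h2 _ hx)).le)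
        (Real.rpow_nonneg (le_of_lt hr) _)
  have hνint (t : E) : Integrable (fun p => 1 - Real.cos (inner ℝ (g p) t)) ν := by
    rw [integrable_withDensity_iff_integrable_smul' (by fun_prop) (by simp)]
    refine (hPint t).congr ?_
    filter_upwards [hwp] with p hp
    rw [ENNReal.toReal_ofReal hp, smul_eq_mul]
  have hνval (t : E) : ∫ p, (1 - Real.cos (inner ℝ (g p) t)) ∂ν
      = ∫ x in A, |inner ℝ (F x) t| ^ α x := by
    rw [integral_withDensity_eq_integral_toReal_smul (by fun_prop) (by simp)]
    calc _ = ∫ p, w p * (1 - Real.cos (inner ℝ (g p) t)) ∂P := by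
          refine integral_congr_ae ?_
          filter_upwards [hwp] with p hp
          rw [ENNReal.toReal_ofReal hp, smul_eq_mul]
      _ = _ := by
          rw [integral_prod _ (hPint t)]
          exact setIntegral_congr_fun hA fun x hx => hfib t x hx
  have : SigmaFinite ν := SigmaFinite.withDensity_ofReal _
  have hfin (n : ℕ) : IsFiniteMeasure (ν.restrict (spanningSets ν n)) :=
    ⟨by simpa using measure_spanningSets_lt_top ν n⟩
  refine .of_tendsto (fun n => isCharExponent_integral_one_sub_cos
    (ν.restrict (spanningSets ν n)) hg) ?_ fun t => ?_
  · exact Complex.continuous_ofReal.continuousAt.comp hcont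
  · refine (Complex.continuous_ofReal.tendsto _).comp ?_
    have := tendsto_setIntegral_of_monotone (μ := ν) (f := fun p => 1 - Real.cos (inner ℝ (g p) t))
      (measurableSet_spanningSets ν) (monotone_spanningSets ν)
      (by rw [iUnion_spanningSets]; exact (hνint t).integrableOn)
    rwa [iUnion_spanningSets, setIntegral_univ, hνval] at this

/-- Symmetric jumps of size `m⁻¹` and rate of order `m ^ 2` approximate the Gaussian exponent `u ^ 2`
from below: the factor `sinc ^ 2` is at most `1` and tends to `1` as `m → ∞`. -/
theorem gaussian_approx {m : ℝ} (hm : m ≠ 0) (u : ℝ) :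
    2 * m ^ 2 * (1 - Real.cos (m⁻¹ * u)) = |u| ^ (2 : ℝ) * Real.sinc (m⁻¹ * u / 2) ^ 2 := by
  rcases eq_or_ne u 0 with rfl | hu
  · simp
  have h1 : Real.cos (m⁻¹ * u) = 1 - 2 * Real.sin (m⁻¹ * u / 2) ^ 2 := by
    rw [show m⁻¹ * u = 2 * (m⁻¹ * u / 2) by ring, Real.cos_two_mul, Real.cos_sq']
    ring_nf
  rw [Real.sinc_of_ne_zero (by positivity), h1, Real.rpow_two, sq_abs]
  field_simp
  ring

/-- The part of the exponent where `α = 2`: the exponent of a Gaussian law, obtained as a limit of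
compound Poisson exponents with small jumps. -/
theorem isCharExponent_two {A : Set ℝ} {F : ℝ → E} (hF : Measurable F)
    (hint : ∀ t, IntegrableOn (fun x => |inner ℝ (F x) t| ^ (2 : ℝ)) A)
    (hcont : ContinuousAt (fun t => ∫ x in A, |inner ℝ (F x) t| ^ (2 : ℝ)) 0) :
    IsCharExponent (fun t => ((∫ x in A, |inner ℝ (F x) t| ^ (2 : ℝ) : ℝ) : ℂ)) := by
  let B : ℕ → Set ℝ := fun n => Icc (-n : ℝ) n
  let c : ℕ → NNReal := fun n => 2 * (n + 1 : NNReal) ^ 2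
  have hm0 (n : ℕ) : (n + 1 : ℝ) ≠ 0 := by positivity
  have hval (n : ℕ) (t : E) :
      ∫ x, (1 - Real.cos (inner ℝ ((n + 1 : ℝ)⁻¹ • F x) t))
        ∂(c n • (volume.restrict A).restrict (B n))
      = ∫ x in A, (B n).indicator (fun x => |inner ℝ (F x) t| ^ (2 : ℝ)
          * Real.sinc ((n + 1 : ℝ)⁻¹ * inner ℝ (F x) t / 2) ^ 2) x := by
    rw [integral_indicator measurableSet_Icc, integral_smul_nnreal_measure, NNReal.smul_def,
      smul_eq_mul, ← integral_const_mul]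
    congr 1 with x
    rw [← gaussian_approx (hm0 n), real_inner_smul_left]
    simp [c]
  have hfin (n : ℕ) : IsFiniteMeasure ((volume.restrict A).restrict (B n)) :=
    ⟨by
      rw [Measure.restrict_apply_univ]
      exact (Measure.restrict_apply_le _ _).trans_lt (by simp [B])⟩
  refine .of_tendsto (fun n => isCharExponent_integral_one_sub_cos
    (c n • (volume.restrict A).restrict (B n)) (g := fun x => (n + 1 : ℝ)⁻¹ • F x)
    (by fun_prop)) ?_ fun t => ?_
  · exact Complex.continuous_ofReal.continuousAt.comp hcont
  · refine (Complex.continuous_ofReal.tendsto _).comp ?_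
    simp_rw [hval]
    have hsm : Measurable Real.sinc := Real.continuous_sinc.measurable
    refine tendsto_integral_of_dominated_convergence (fun x => |inner ℝ (F x) t| ^ (2 : ℝ))
      (fun n => (Measurable.indicator (by fun_prop) measurableSet_Icc).aestronglyMeasurable)
      (hint t) (fun n => ae_of_all _ fun x => ?_) (ae_of_all _ fun x => ?_)
    · refine (norm_indicator_le_norm_self _ _).trans ?_
      rw [Real.norm_of_nonneg (by positivity)]
      refine mul_le_of_le_one_right (by positivity) ?_
      rw [sq_le_one_iff_abs_le_one]
      exact Real.abs_sinc_le_one _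
    · have h1 : Tendsto (fun n : ℕ => (n + 1 : ℝ)⁻¹ * inner ℝ (F x) t / 2) atTop (𝓝 0) := by
        have := (tendsto_one_div_add_atTop_nhds_zero_nat (𝕜 := ℝ)).mul_const (inner ℝ (F x) t / 2)
        simpa [mul_div_assoc] using this
      have h2 := (((Real.continuous_sinc.tendsto 0).comp h1).pow 2).const_mul
        (|inner ℝ (F x) t| ^ (2 : ℝ))
      rw [Real.sinc_zero, one_pow, mul_one] at h2
      refine h2.congr' ?_
      obtain ⟨N, hN⟩ := exists_nat_ge |x|
      filter_upwards [eventually_ge_atTop N] with n hn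
      have hx : x ∈ B n := abs_le.1 (hN.trans (by exact_mod_cast hn))
      rw [indicator_of_mem hx]
      rfl

/-- The claim for a vector-valued kernel `F`. Integrability of `‖F x‖ ^ α x` dominates all the
integrands, locally uniformly in `t`, because `‖t‖ ^ α x ≤ max 1 ‖t‖ ^ 2`. -/
theorem isCharExponent_multistable {a : ℝ} (ha : 0 < a) {α : ℝ → ℝ} (hαm : Measurable α)
    (hα : ∀ x, α x ∈ Set.Icc a 2) {F : ℝ → E} (hF : Measurable F)
    (hint : Integrable fun x => ‖F x‖ ^ α x) :
    IsCharExponent (fun t => ((∫ x, |inner ℝ (F x) t| ^ α x : ℝ) : ℂ)) := by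
  have hα0 (x : ℝ) : 0 < α x := ha.trans_le (hα x).1
  have hb (t : E) (x : ℝ) : ‖|inner ℝ (F x) t| ^ α x‖ ≤ max 1 ‖t‖ ^ 2 * ‖F x‖ ^ α x := by
    rw [Real.norm_of_nonneg (by positivity)]
    calc |inner ℝ (F x) t| ^ α x ≤ (‖F x‖ * ‖t‖) ^ α x :=
          Real.rpow_le_rpow (abs_nonneg _) (abs_real_inner_le_norm _ _) (hα0 x).le
      _ = ‖t‖ ^ α x * ‖F x‖ ^ α x := by
          rw [Real.mul_rpow (norm_nonneg _) (norm_nonneg _), mul_comm]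
      _ ≤ _ := by
          gcongr
          exact rpow_le_max_sq (norm_nonneg _) (hα0 x) (hα x).2
  have hmeas (t : E) : Measurable fun x => |inner ℝ (F x) t| ^ α x := by fun_prop
  have hI (t : E) : Integrable fun x => |inner ℝ (F x) t| ^ α x :=
    (hint.const_mul _).mono' (hmeas t).aestronglyMeasurable (ae_of_all _ (hb t))
  have hcont (A : Set ℝ) : ContinuousAt (fun t => ∫ x in A, |inner ℝ (F x) t| ^ α x) 0 := by
    refine continuousAt_of_dominated (bound := fun x => ‖F x‖ ^ α x)
      (Eventually.of_forall fun t => (hmeas t).aestronglyMeasurable) ?_ hint.integrableOn ?_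
    · filter_upwards [Metric.closedBall_mem_nhds (0 : E) one_pos] with t ht
      refine ae_of_all _ fun x => (hb t x).trans ?_
      rw [max_eq_left (by simpa using ht)]
      simp
    · refine ae_of_all _ fun x => ContinuousAt.rpow_const (by fun_prop) (Or.inr (hα0 x).le)
  -- The integral defining `K(2)` diverges, so the points with `α x = 2` have to be treated separately.
  let A : Set ℝ := {x | α x < 2}
  have hA : MeasurableSet A := measurableSet_lt hαm measurable_const
  have hAc (t : E) : EqOn (fun x => |inner ℝ (F x) t| ^ α x)
      (fun x => |inner ℝ (F x) t| ^ (2 : ℝ)) Aᶜ := fun x hx => by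
    have : α x = 2 := le_antisymm (hα x).2 (not_lt.1 hx)
    simp only [this]
  have hAc' (t : E) := setIntegral_congr_fun (μ := volume) hA.compl (hAc t)
  have k1 := isCharExponent_lt_two hαm hA (fun x _ => hα0 x) (fun x hx => hx) hF
    (fun t => (hI t).integrableOn) (hcont A)
  have k2 := isCharExponent_two hF
    (fun t => (integrableOn_congr_fun (hAc t) hA.compl).1 (hI t).integrableOn)
    (by simpa only [← hAc'] using hcont Aᶜ)
  convert k1.add k2 using 2 with t
  rw [← Complex.ofReal_add, ← hAc', integral_add_compl hA (hI t)]

end Exponents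

/-! ### From scalar kernels to a vector-valued kernel -/

theorem integrable_norm_rpow {d : ℕ} {a : ℝ} (ha : 0 < a)
    {α : ℝ → ℝ} (hαm : Measurable α) (hα : ∀ x, α x ∈ Set.Icc a 2)
    {f : Fin d → ℝ → ℝ} (hf : ∀ j, MemFalpha α (f j)) :
    Integrable fun x => ‖(WithLp.toLp 2 fun j => f j x : EuclideanSpace ℝ (Fin d))‖ ^ α x := by
  have hα0 (x : ℝ) : 0 < α x := ha.trans_le (hα x).1
  have hF : Measurable fun x => (WithLp.toLp 2 fun j => f j x : EuclideanSpace ℝ (Fin d)) :=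
    (PiLp.continuous_toLp 2 _).measurable.comp (measurable_pi_lambda _ fun j => (hf j).1)
  have hj (j : Fin d) : Integrable fun x => (d * |f j x|) ^ α x := by
    have hm : Measurable fun x => (d * |f j x|) ^ α x := by
      have := (hf j).1
      fun_prop
    rcases (hf j).2 with h0 | ⟨lam, hlam, h1⟩
    · refine (integrable_zero ℝ ℝ volume).congr ?_
      filter_upwards [h0] with x hx
      simp [hx, (hα0 x).ne']
    · have hi : Integrable fun x => |f j x / lam| ^ α x :=
        -- A non-integrable function has Bochner integral `0`, so the value `1` forces integrability.
        Integrable.of_integral_ne_zero (by rw [h1]; exact one_ne_zero)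
      refine (hi.const_mul (max 1 (d * lam) ^ 2)).mono' hm.aestronglyMeasurable
        (ae_of_all _ fun x => ?_)
      rw [Real.norm_of_nonneg (by positivity),
        show (d : ℝ) * |f j x| = (d * lam) * |f j x / lam| by
          rw [abs_div, abs_of_pos hlam]; field_simp,
        Real.mul_rpow (by positivity) (by positivity)]
      gcongr
      exact rpow_le_max_sq (by positivity) (hα0 x) (hα x).2
  refine (integrable_finsetSum Finset.univ fun j _ => hj j).mono'
    (hF.norm.pow hαm).aestronglyMeasurable (ae_of_all _ fun x => ?_)
  rw [Real.norm_of_nonneg (by positivity)]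
  -- For `d = 0` the norm vanishes and `0 ^ α x = 0`, as `α x > 0`.
  rcases isEmpty_or_nonempty (Fin d) with he | hne
  · simp [EuclideanSpace.norm_eq, (hα0 x).ne']
  have hd : (1 : ℝ) ≤ d := by
    have := Fin.pos_iff_nonempty.2 hne
    exact_mod_cast this
  obtain ⟨j, -, hjle⟩ := Finset.exists_max_image Finset.univ (fun j => |f j x|)
    Finset.univ_nonempty
  have hle : ‖(WithLp.toLp 2 fun j => f j x : EuclideanSpace ℝ (Fin d))‖ ≤ d * |f j x| := by
    rw [EuclideanSpace.norm_eq]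
    refine Real.sqrt_le_iff.2 ⟨by positivity, ?_⟩
    calc ∑ i, ‖f i x‖ ^ 2 ≤ ∑ _i : Fin d, |f j x| ^ 2 :=
          Finset.sum_le_sum fun i hi => pow_le_pow_left₀ (norm_nonneg _) (hjle i hi) 2
      _ = d * |f j x| ^ 2 := by simp
      _ ≤ d ^ 2 * |f j x| ^ 2 := by gcongr; nlinarith
      _ = _ := by ring
  exact (Real.rpow_le_rpow (norm_nonneg _) hle (hα0 x).le).trans
    (Finset.single_le_sum (f := fun j => (d * |f j x|) ^ α x)
      (fun i _ => by positivity) (Finset.mem_univ j))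

/-- the function
`φ(θ) = exp(−∫ |Σ_j θ_j f_j(x)|^{α(x)} dx)` is the characteristic function of a
probability measure on `ℝ^d`. -/
theorem multistable_characteristic_function (d : ℕ) (a : ℝ) (ha : 0 < a)
    (α : ℝ → ℝ) (hαm : Measurable α) (hα : ∀ x, α x ∈ Set.Icc a 2)
    (f : Fin d → ℝ → ℝ) (hf : ∀ j, MemFalpha α (f j)) :
    ∃ μ : Measure (Fin d → ℝ), IsProbabilityMeasure μ ∧
      ∀ θ : Fin d → ℝ,
        ∫ y, Complex.exp (Complex.I * ((∑ j, θ j * y j : ℝ) : ℂ)) ∂μ =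
          ((Real.exp (-(∫ x : ℝ, |∑ j, θ j * f j x| ^ α x)) : ℝ) : ℂ) := by
  have hF : Measurable fun x => (WithLp.toLp 2 fun j => f j x : EuclideanSpace ℝ (Fin d)) :=
    (PiLp.continuous_toLp 2 _).measurable.comp (measurable_pi_lambda _ fun j => (hf j).1)
  obtain ⟨μ, hμ, h⟩ := isCharExponent_multistable ha hαm hα hF (integrable_norm_rpow ha hαm hα hf)
  have hm : Measurable (WithLp.ofLp : EuclideanSpace ℝ (Fin d) → Fin d → ℝ) :=
    (PiLp.continuous_ofLp 2 _).measurable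
  refine ⟨μ.map WithLp.ofLp, Measure.isProbabilityMeasure_map hm.aemeasurable, fun θ => ?_⟩
  rw [integral_map hm.aemeasurable
    (Continuous.aestronglyMeasurable (by fun_prop))]
  have := h (WithLp.toLp 2 θ)
  simp only [charFun_apply, PiLp.inner_apply, Real.inner_apply] at this
  simpa [mul_comm] using this
end
end

section
/- Let 0 < a, let α : ℝ → [a,2] be Lebesgue measurable, and let {I(f) : f ∈ F_α} be a family of real random variables on a probability space such that for every d, every f₁,…,f_d ∈ F_α and every θ ∈ ℝ^d, 𝔼[exp(i Σ_j θ_j I(f_j))] = exp(−∫_ℝ |Σ_j θ_j f_j(x)|^{α(x)} dx). Then the multistable integral is linear: for all f₁, f₂ ∈ F_α and a₁, a₂ ∈ ℝ, I(a₁f₁ + a₂f₂) = a₁ I(f₁) + a₂ I(f₂) almost surely. -/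
/-!
The class `F_α` consists of the measurable `f` whose modular `∫ |c f|^α` is finite for every
scaling `c` (`integrable_scaled_of_memFalpha`, `memFalpha_of_integrable`): if `f` is not a.e. zero,
`s ↦ ∫ |s f|^α` is continuous and takes the value `1` somewhere, by the intermediate value theorem.
The modular characterisation makes `F_α` closed under linear combinations, because
`|x + y|^p ≤ 4 (|x|^p + |y|^p)` for `p ≤ 2`.

Hence the characteristic function formula applies to the triple `(a₁f₁ + a₂f₂, f₁, f₂)` with
coefficients `t (1, -a₁, -a₂)`. The corresponding combination of functions vanishes identically, so
`X = I(a₁f₁ + a₂f₂) - a₁ I(f₁) - a₂ I(f₂)` satisfies `𝔼 exp(itX) = 1` for all `t`.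
Thus `cos (tX) = 1` a.s. for each `t`, and letting `t` run through `1/(n+1)` forces `X = 0` a.s.
(`ae_eq_zero_of_charFun_eq_one`). No measurability of `I f` is needed: a nonzero Bochner integral
already guarantees that the integrand is integrable.
-/


open MeasureTheory Filter Set Topology ProbabilityTheory BoundedContinuousFunction

noncomputable section

/-- A function whose characteristic function is identically `1` vanishes a.e.; the function itself
is not assumed measurable. -/
lemma ae_eq_zero_of_charFun_eq_one {Ω : Type*} [MeasurableSpace Ω]
    (P : Measure Ω) [IsProbabilityMeasure P] (X : Ω → ℝ)
    (h : ∀ t : ℝ, ∫ ω, Complex.exp (Complex.I * ((t * X ω : ℝ) : ℂ)) ∂P = 1) :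
    ∀ᵐ ω ∂P, X ω = 0 := by
  have hcos : ∀ t : ℝ, ∀ᵐ ω ∂P, Real.cos (t * X ω) = 1 := by
    intro t
    have hint : Integrable (fun ω => Complex.exp (Complex.I * ((t * X ω : ℝ) : ℂ))) P :=
      Integrable.of_integral_ne_zero (by rw [h t]; exact one_ne_zero)
    have hre : ∀ ω, (Complex.exp (Complex.I * ((t * X ω : ℝ) : ℂ))).re = Real.cos (t * X ω) := by
      intro ω
      rw [mul_comm, Complex.exp_ofReal_mul_I_re]
    have hci : Integrable (fun ω => Real.cos (t * X ω)) P := by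
      have := hint.re
      simpa only [RCLike.re_eq_complex_re, hre] using this
    have hcv : ∫ ω, Real.cos (t * X ω) ∂P = 1 := by
      have h1 := integral_re hint
      rw [h t] at h1
      simpa only [RCLike.re_eq_complex_re, hre, Complex.one_re] using h1
    have hz : ∫ ω, (1 - Real.cos (t * X ω)) ∂P = 0 := by
      rw [integral_sub (integrable_const _) hci, hcv]
      simp
    have h0 := (integral_eq_zero_iff_of_nonneg
      (fun ω => sub_nonneg.2 (Real.cos_le_one (t * X ω)))
      ((integrable_const (1 : ℝ)).sub hci)).1 hz
    filter_upwards [h0] with ω hω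
    have : 1 - Real.cos (t * X ω) = 0 := hω
    linarith
  have hall : ∀ᵐ ω ∂P, ∀ n : ℕ, Real.cos (((n : ℝ) + 1)⁻¹ * X ω) = 1 :=
    ae_all_iff.2 fun n => hcos _
  filter_upwards [hall] with ω hω
  obtain ⟨n, hn⟩ := exists_nat_gt |X ω|
  have hpos : (0 : ℝ) < (n : ℝ) + 1 := by positivity
  -- For large `n` the angle lies in `(-2π, 2π)`, where `cos` takes the value `1` only at `0`.
  have hlt : |((n : ℝ) + 1)⁻¹ * X ω| < 1 := by
    rw [abs_mul, abs_of_pos (inv_pos.2 hpos), inv_mul_lt_iff₀ hpos]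
    linarith
  have hpi := Real.pi_gt_three
  rw [abs_lt] at hlt
  have h0 := (Real.cos_eq_one_iff_of_lt_of_lt (by linarith) (by linarith)).1 (hω n)
  rcases mul_eq_zero.1 h0 with h | h
  · exact absurd h (inv_pos.2 hpos).ne'
  · exact h

lemma abs_add_rpow_le {p x y : ℝ} (hp : 0 ≤ p) (hp2 : p ≤ 2) :
    |x + y| ^ p ≤ 4 * (|x| ^ p + |y| ^ p) := by
  have h1 : |x + y| ≤ 2 * max |x| |y| := by
    have := abs_add_le x y
    have := le_max_left |x| |y|
    have := le_max_right |x| |y|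
    linarith
  have hm : 0 ≤ max |x| |y| := le_max_of_le_left (abs_nonneg x)
  have hmp : (max |x| |y|) ^ p ≤ |x| ^ p + |y| ^ p := by
    have hx : 0 ≤ |x| ^ p := by positivity
    have hy : 0 ≤ |y| ^ p := by positivity
    rcases max_choice |x| |y| with h | h <;> rw [h] <;> linarith
  have h2 : (2 : ℝ) ^ p ≤ 4 := by
    calc (2 : ℝ) ^ p ≤ 2 ^ (2 : ℝ) := Real.rpow_le_rpow_of_exponent_le (by norm_num) hp2
      _ = 4 := by norm_num
  calc |x + y| ^ p ≤ (2 * max |x| |y|) ^ p := Real.rpow_le_rpow (abs_nonneg _) h1 hp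
    _ = 2 ^ p * (max |x| |y|) ^ p := Real.mul_rpow (by norm_num) hm
    _ ≤ 4 * (|x| ^ p + |y| ^ p) := by gcongr

lemma measurable_modular {α f : ℝ → ℝ} (hα : Measurable α) (hf : Measurable f) (c : ℝ) :
    Measurable fun x => |c * f x| ^ α x := by
  have : Measurable fun x => |c * f x| := (measurable_const.mul hf).abs
  exact this.pow hα

/-- Finiteness of the modular does not depend on the scaling, as the exponent is bounded. -/
lemma integrable_rescale {α f : ℝ → ℝ} {a : ℝ} (ha : 0 < a) (hαm : Measurable α)
    (hα : ∀ x, α x ∈ Set.Icc a 2) (hf : Measurable f)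
    (h : Integrable fun x => |f x| ^ α x) (c : ℝ) : Integrable fun x => |c * f x| ^ α x := by
  refine (h.const_mul (max 1 |c| ^ (2 : ℝ))).mono'
    (measurable_modular hαm hf c).aestronglyMeasurable (ae_of_all _ fun x => ?_)
  have hαx := hα x
  have hα0 : 0 ≤ α x := ha.le.trans hαx.1
  rw [Real.norm_of_nonneg (by positivity), abs_mul, Real.mul_rpow (abs_nonneg _) (abs_nonneg _)]
  gcongr
  calc |c| ^ α x ≤ max 1 |c| ^ α x :=
        Real.rpow_le_rpow (abs_nonneg _) (le_max_right _ _) hα0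
    _ ≤ max 1 |c| ^ (2 : ℝ) := Real.rpow_le_rpow_of_exponent_le (le_max_left _ _) hαx.2

lemma integrable_scaled_of_memFalpha {α f : ℝ → ℝ} {a : ℝ} (ha : 0 < a) (hαm : Measurable α)
    (hα : ∀ x, α x ∈ Set.Icc a 2) (hf : MemFalpha α f) (c : ℝ) :
    Integrable fun x => |c * f x| ^ α x := by
  obtain ⟨hfm, h0 | ⟨l, hl, h1⟩⟩ := hf
  · refine (integrable_zero ℝ ℝ volume).congr ?_
    filter_upwards [h0] with x hx
    have : α x ≠ 0 := (ha.trans_le (hα x).1).ne'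
    simp [hx, Real.zero_rpow this]
  · have hint : Integrable fun x => |f x / l| ^ α x :=
      Integrable.of_integral_ne_zero (by rw [h1]; exact one_ne_zero)
    refine (integrable_rescale ha hαm hα (hfm.div_const l) hint (c * l)).congr
      (ae_of_all _ fun x => ?_)
    have : c * l * (f x / l) = c * f x := by field_simp
    simp only [this]

/-- A measurable function of finite modular belongs to `F_α`: unless it is a.e. zero, some scaling
of it has modular exactly `1`. -/
lemma memFalpha_of_integrable {α f : ℝ → ℝ} {a : ℝ} (ha : 0 < a) (hαm : Measurable α)
    (hα : ∀ x, α x ∈ Set.Icc a 2) (hf : Measurable f)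
    (h : Integrable fun x => |f x| ^ α x) : MemFalpha α f := by
  refine ⟨hf, or_iff_not_imp_left.2 fun hne => ?_⟩
  have hαpos : ∀ x, 0 < α x := fun x => ha.trans_le (hα x).1
  have hnn : ∀ x, 0 ≤ |f x| ^ α x := fun x => by positivity
  have hφ : 0 < ∫ x, |f x| ^ α x := by
    refine lt_of_le_of_ne (integral_nonneg hnn) fun h0 => hne ?_
    filter_upwards [(integral_eq_zero_iff_of_nonneg hnn h).1 h0.symm] with x hx
    have := (Real.rpow_eq_zero (abs_nonneg _) (hαpos x).ne').1 hx
    simpa using this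
  set φ := ∫ x, |f x| ^ α x with hφdef
  set ψ : ℝ → ℝ := fun s => ∫ x, |s * f x| ^ α x with hψ
  have hψ1 : ψ 1 = φ := by simp [hψ, hφdef]
  have hint := integrable_rescale ha hαm hα hf h
  -- Comparing `s ^ α` with `s ^ a` on either side of `s = 1` shows that `ψ s₀` and `ψ 1` lie on
  -- opposite sides of `1`, where `s₀ ^ a * φ = 1`.
  obtain ⟨s₀, hs₀, hs₀φ⟩ : ∃ s₀ : ℝ, 0 < s₀ ∧ s₀ ^ a * φ = 1 := by
    refine ⟨(φ⁻¹) ^ a⁻¹, by positivity, ?_⟩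
    rw [Real.rpow_inv_rpow (by positivity) ha.ne', inv_mul_cancel₀ hφ.ne']
  have hmul : ∀ x, |s₀ * f x| ^ α x = s₀ ^ α x * |f x| ^ α x := fun x => by
    rw [abs_mul, abs_of_pos hs₀, Real.mul_rpow hs₀.le (abs_nonneg _)]
  have hconst : ∫ x, s₀ ^ a * |f x| ^ α x = 1 := by rw [integral_const_mul, ← hφdef, hs₀φ]
  have hmem : (1 : ℝ) ∈ Set.uIcc (ψ 1) (ψ s₀) := by
    rw [hψ1, Set.mem_uIcc]
    rcases le_total s₀ 1 with hs | hs
    · right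
      constructor
      · rw [← hconst]
        refine integral_mono (hint s₀) (h.const_mul _) fun x => ?_
        simp only [hmul]
        exact mul_le_mul_of_nonneg_right
          (Real.rpow_le_rpow_of_exponent_ge hs₀ hs (hα x).1) (hnn x)
      · have : s₀ ^ a ≤ 1 := Real.rpow_le_one hs₀.le hs ha.le
        nlinarith
    · left
      constructor
      · have : 1 ≤ s₀ ^ a := Real.one_le_rpow hs ha.le
        nlinarith
      · rw [← hconst]
        refine integral_mono (h.const_mul _) (hint s₀) fun x => ?_
        simp only [hmul]
        exact mul_le_mul_of_nonneg_right
          (Real.rpow_le_rpow_of_exponent_le hs (hα x).1) (hnn x)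
  have hpos : ∀ s ∈ Set.uIcc 1 s₀, 0 < s := fun s hs =>
    (lt_min one_pos hs₀).trans_le hs.1
  have hcont : ContinuousOn ψ (Set.uIcc 1 s₀) := by
    refine continuousOn_of_dominated (bound := fun x => |max 1 s₀ * f x| ^ α x)
      (fun s _ => (measurable_modular hαm hf s).aestronglyMeasurable)
      (fun s hs => ae_of_all _ fun x => ?_) (hint _) (ae_of_all _ fun x => ?_)
    · rw [Real.norm_of_nonneg (by positivity)]
      refine Real.rpow_le_rpow (abs_nonneg _) ?_ (hαpos x).le
      rw [abs_mul, abs_mul]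
      refine mul_le_mul_of_nonneg_right ?_ (abs_nonneg _)
      rw [abs_of_pos (hpos s hs), abs_of_pos (one_pos.trans_le (le_max_left _ _))]
      exact hs.2
    · exact ((continuous_id.mul continuous_const).abs.rpow_const
        fun _ => Or.inr (hαpos x).le).continuousOn
  obtain ⟨s, hs, hs1⟩ := intermediate_value_uIcc hcont hmem
  refine ⟨s⁻¹, inv_pos.2 (hpos s hs), ?_⟩
  rw [← hs1]
  simp only [hψ, div_inv_eq_mul, mul_comm]

lemma memFalpha_linear_combination {α f₁ f₂ : ℝ → ℝ} {a : ℝ} (ha : 0 < a) (hαm : Measurable α)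
    (hα : ∀ x, α x ∈ Set.Icc a 2) (hf₁ : MemFalpha α f₁) (hf₂ : MemFalpha α f₂) (a₁ a₂ : ℝ) :
    MemFalpha α fun x => a₁ * f₁ x + a₂ * f₂ x := by
  have hm : Measurable fun x => a₁ * f₁ x + a₂ * f₂ x :=
    (hf₁.1.const_mul a₁).add (hf₂.1.const_mul a₂)
  refine memFalpha_of_integrable ha hαm hα hm ?_
  refine (((integrable_scaled_of_memFalpha ha hαm hα hf₁ a₁).add
    (integrable_scaled_of_memFalpha ha hαm hα hf₂ a₂)).const_mul 4).mono'
    (hm.abs.pow hαm).aestronglyMeasurable (ae_of_all _ fun x => ?_)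
  rw [Real.norm_of_nonneg (by positivity)]
  exact abs_add_rpow_le (ha.le.trans (hα x).1) (hα x).2

/-- linearity of the multistable integral:
`I(a₁f₁ + a₂f₂) = a₁I(f₁) + a₂I(f₂)` almost surely. -/
theorem multistable_integral_linear {Ω : Type*} [MeasurableSpace Ω]
    (P : Measure Ω) [IsProbabilityMeasure P]
    (a : ℝ) (ha : 0 < a) (α : ℝ → ℝ) (hαm : Measurable α) (hα : ∀ x, α x ∈ Set.Icc a 2)
    (I : (ℝ → ℝ) → Ω → ℝ)
    (hCF : ∀ (d : ℕ) (f : Fin d → ℝ → ℝ), (∀ j, MemFalpha α (f j)) →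
      ∀ θ : Fin d → ℝ,
        ∫ ω, Complex.exp (Complex.I * ((∑ j, θ j * I (f j) ω : ℝ) : ℂ)) ∂P =
          ((Real.exp (-(∫ x : ℝ, |∑ j, θ j * f j x| ^ α x)) : ℝ) : ℂ))
    (f₁ f₂ : ℝ → ℝ) (hf₁ : MemFalpha α f₁) (hf₂ : MemFalpha α f₂) (a₁ a₂ : ℝ) :
    ∀ᵐ ω ∂P, I (fun x => a₁ * f₁ x + a₂ * f₂ x) ω = a₁ * I f₁ ω + a₂ * I f₂ ω := by
  have hg := memFalpha_linear_combination ha hαm hα hf₁ hf₂ a₁ a₂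
  set g : ℝ → ℝ := fun x => a₁ * f₁ x + a₂ * f₂ x with hgdef
  have key := ae_eq_zero_of_charFun_eq_one P (fun ω => I g ω - a₁ * I f₁ ω - a₂ * I f₂ ω) ?_
  · filter_upwards [key] with ω hω
    linarith
  intro t
  have h := hCF 3 ![g, f₁, f₂] (by
    intro j
    fin_cases j
    · exact hg
    · exact hf₁
    · exact hf₂) ![t, -(t * a₁), -(t * a₂)]
  have hX : ∀ ω, ∑ j, ![t, -(t * a₁), -(t * a₂)] j * I (![g, f₁, f₂] j) ω =
      t * (I g ω - a₁ * I f₁ ω - a₂ * I f₂ ω) := by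
    intro ω
    simp [Fin.sum_univ_three]
    ring
  have hz : ∀ x, |∑ j, ![t, -(t * a₁), -(t * a₂)] j * ![g, f₁, f₂] j x| ^ α x = 0 := by
    intro x
    have h0 : ∑ j, ![t, -(t * a₁), -(t * a₂)] j * ![g, f₁, f₂] j x = 0 := by
      simp [Fin.sum_univ_three, hgdef]
      ring
    rw [h0, abs_zero, Real.zero_rpow (ha.trans_le (hα x).1).ne']
  simp only [hX, hz] at h
  rw [h]
  simp
end
end

section
/- Let 0 < a ≤ b ≤ 2, let α : ℝ → [a,b] be Lebesgue measurable, and let {M(A) : A ∈ E₀} be a family of real random variables on a probability space such that for every d and all A₁,…,A_d ∈ E₀ and θ ∈ ℝ^d, 𝔼[exp(i Σ_{j=1}^d θ_j M(A_j))] = exp(−∫_ℝ |Σ_{j=1}^d θ_j 1_{A_j}(x)|^{α(x)} dx). Then M is σ-additive: if A₁, A₂, … ∈ E₀ are pairwise disjoint and B = ∪_{j=1}^∞ A_j ∈ E₀, then Σ_{j=1}^{k} M(A_j) converges almost surely to M(B) as k → ∞. -/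
/-!
Write `B = ⋃ j, A j`, `S_k = ∑_{j<k} M (A j)` and `T_k = M B - S_k`; the claim is `T_k → 0` almost
surely.

Up to null sets `T_k` is the measure of the tail `⋃ j ≥ k, A j`. Since the exponent
`∫ |f|^α` is additive over functions with disjoint supports (`integral_abs_rpow_add`), the joint
characteristic function of `(M (A 0), …, M (A (k - 1)))` and `T_k` factorizes, so `T_k` is
independent of the past `ℱ_k = σ(M (A 0), …, M (A (k - 1)))`. The characteristic function of `T_k`
is real and, by dominated convergence (`tendsto_integral_remainder`), tends to one pointwise.

Convergence in law of the independent remainders gives almost sure convergence as follows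
(`ae_tendsto_zero_of_indep`). For each `θ`,
`𝔼[exp (iθ M B) | ℱ_k] = exp (iθ S_k) 𝔼[exp (iθ T_k)]`, whose left side converges almost surely by
Lévy's upward theorem. Hence `cos (θ T_k)` converges almost surely; its limit is at most one and has
mean one, so it is one (`ae_tendsto_cos`). By Fubini, almost surely `cos (θ T_k) → 1` for
Gaussian-almost every `θ`, and integrating in `θ` gives `exp (-T_k ^ 2 / 2) → 1`, that is, `T_k → 0`
(`tendsto_zero_of_cos`).
-/


open MeasureTheory Filter Set Topology ProbabilityTheory BoundedContinuousFunction

noncomputable section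

/-! ### From remainders independent of the past to almost sure convergence -/

/-- If `cos (θ t_k) → 1` for Gaussian-almost every `θ`, then `t_k → 0`: integrating in `θ` gives
`exp (-t_k ^ 2 / 2) → 1`. -/
lemma tendsto_zero_of_cos (t : ℕ → ℝ)
    (h : ∀ᵐ θ ∂(gaussianReal 0 1), Tendsto (fun k => Real.cos (θ * t k)) atTop (𝓝 1)) :
    Tendsto t atTop (𝓝 0) := by
  have hint : ∀ s : ℝ, ∫ θ, Real.cos (θ * s) ∂(gaussianReal 0 1) = Real.exp (-(s ^ 2 / 2)) := by
    intro s
    have h1 := charFun_gaussianReal (μ := 0) (v := 1) s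
    rw [charFun_apply_real] at h1
    have h2 := congrArg Complex.re h1
    have hi : Integrable (fun x : ℝ => Complex.exp (s * x * Complex.I)) (gaussianReal 0 1) := by
      refine Integrable.of_bound (by fun_prop) 1 (ae_of_all _ fun x => ?_)
      rw [← Complex.ofReal_mul, Complex.norm_exp_ofReal_mul_I]
    have h3 := integral_re hi
    simp only [RCLike.re_to_complex] at h3
    rw [← h3] at h2
    convert h2 using 1
    · refine integral_congr_ae (ae_of_all _ fun x => ?_)
      simp only
      rw [← Complex.ofReal_mul, Complex.exp_ofReal_mul_I_re, mul_comm]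
    · rw [← Complex.ofReal_re (Real.exp _)]
      congr 1
      push_cast
      congr 1
      ring
  have hlim : Tendsto (fun k => ∫ θ, Real.cos (θ * t k) ∂(gaussianReal 0 1)) atTop
      (𝓝 (∫ _θ, (1 : ℝ) ∂(gaussianReal 0 1))) := by
    refine tendsto_integral_of_dominated_convergence (fun _ => 1) (fun k => by fun_prop)
      (integrable_const _) (fun k => ae_of_all _ fun θ => ?_) h
    simpa using Real.abs_cos_le_one _
  simp only [hint, integral_const, probReal_univ, one_smul] at hlim
  have hlog := ((Real.continuousAt_log one_ne_zero).tendsto.comp hlim)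
  simp only [Function.comp_def, Real.log_exp, Real.log_one] at hlog
  have hsq : Tendsto (fun k => Real.sqrt (-2 * -(t k ^ 2 / 2))) atTop (𝓝 0) := by
    simpa using (hlog.const_mul (-2)).sqrt
  have heq : (fun k => Real.sqrt (-2 * -(t k ^ 2 / 2))) = fun k => |t k| := by
    funext k
    rw [← Real.sqrt_sq_eq_abs]
    congr 1
    ring
  rw [heq] at hsq
  exact (tendsto_zero_iff_abs_tendsto_zero _).2 hsq

section Probability

variable {Ω : Type*} {mΩ : MeasurableSpace Ω}

/-- Pull-out and independence: if `U` is known at time `m` and `W` is independent of `m`, both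
bounded by one, then `𝔼[U W | m] = 𝔼[W] U`. -/
lemma condExp_mul_indep {m mW : MeasurableSpace Ω} {P : @Measure Ω mΩ} [IsProbabilityMeasure P]
    (hm : m ≤ mΩ) (hmW : mW ≤ mΩ)
    {U W : Ω → ℝ} (hU : Measurable[m] U) (hW : Measurable[mW] W)
    (hind : Indep mW m P) (hU1 : ∀ ω, |U ω| ≤ 1) (hW1 : ∀ ω, |W ω| ≤ 1) :
    P[U * W | m] =ᵐ[P] fun ω => U ω * ∫ ω, W ω ∂P := by
  have hW' : Measurable[mΩ] W := hW.mono hmW le_rfl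
  have hU' : Measurable[mΩ] U := hU.mono hm le_rfl
  have hWi : Integrable W P :=
    Integrable.of_bound hW'.aestronglyMeasurable 1 (ae_of_all _ hW1)
  have hUW : Integrable (U * W) P := by
    refine Integrable.of_bound (hU'.mul hW').aestronglyMeasurable 1 (ae_of_all _ fun ω => ?_)
    simpa [abs_mul] using mul_le_one₀ (hU1 ω) (abs_nonneg _) (hW1 ω)
  have h1 := condExp_mul_of_aestronglyMeasurable_left (m := m)
    hU.stronglyMeasurable.aestronglyMeasurable hUW hWi
  have h2 := condExp_indep_eq hmW hm hW.stronglyMeasurable hind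
  filter_upwards [h1, h2] with ω e1 e2
  rw [e1, Pi.mul_apply, e2]

/-- The core of the convergence argument at one frequency `θ`. With `X = S_k + T_k`, the conditional
expectation of `exp (iθX)` given the past is `𝔼[exp (iθT_k)] exp (iθS_k)`, so `exp (iθS_k)`
converges by Lévy's upward theorem; the limit of `cos (θ T_k) ≤ 1` has mean one. -/
lemma ae_tendsto_cos {P : Measure Ω} [IsProbabilityMeasure P] (ℱ : Filtration ℕ mΩ) (X : Ω → ℝ) (S T : ℕ → Ω → ℝ)
    (hS : ∀ k, Measurable[ℱ k] (S k)) (hT : ∀ k, Measurable (T k))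
    (hX : ∀ k ω, X ω = S k ω + T k ω)
    (hind : ∀ k, Indep (MeasurableSpace.comap (T k) inferInstance) (ℱ k) P) (θ : ℝ)
    (hsin : ∀ k, ∫ ω, Real.sin (θ * T k ω) ∂P = 0)
    (hcos : Tendsto (fun k => ∫ ω, Real.cos (θ * T k ω) ∂P) atTop (𝓝 1)) :
    ∀ᵐ ω ∂P, Tendsto (fun k => Real.cos (θ * T k ω)) atTop (𝓝 1) := by
  have hS' : ∀ k, Measurable (S k) := fun k => (hS k).mono (ℱ.le k) le_rfl
  have hc : ∀ k, P[fun ω => Real.cos (θ * X ω) | ℱ k] =ᵐ[P]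
      fun ω => Real.cos (θ * S k ω) * ∫ ω, Real.cos (θ * T k ω) ∂P := by
    intro k
    have hle : MeasurableSpace.comap (T k) inferInstance ≤ mΩ := (hT k).comap_le
    have hTc : Measurable[MeasurableSpace.comap (T k) inferInstance] (T k) := comap_measurable (T k)
    have e : (fun ω => Real.cos (θ * X ω)) =
        (fun ω => Real.cos (θ * S k ω)) * (fun ω => Real.cos (θ * T k ω)) -
        (fun ω => Real.sin (θ * S k ω)) * (fun ω => Real.sin (θ * T k ω)) := by
      funext ω
      simp only [Pi.sub_apply, Pi.mul_apply, hX k ω, mul_add, Real.cos_add]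
    have c1 := condExp_mul_indep (ℱ.le k) hle
      (Real.measurable_cos.comp ((hS k).const_mul θ))
      (Real.measurable_cos.comp (hTc.const_mul θ)) (hind k)
      (fun ω => Real.abs_cos_le_one _) (fun ω => Real.abs_cos_le_one _)
    have c2 := condExp_mul_indep (ℱ.le k) hle
      (Real.measurable_sin.comp ((hS k).const_mul θ))
      (Real.measurable_sin.comp (hTc.const_mul θ)) (hind k)
      (fun ω => Real.abs_sin_le_one _) (fun ω => Real.abs_sin_le_one _)
    have i1 : Integrable ((fun ω => Real.cos (θ * S k ω)) * (fun ω => Real.cos (θ * T k ω))) P := by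
      refine Integrable.of_bound (by have := hS' k; have := hT k; fun_prop) 1
        (ae_of_all _ fun ω => ?_)
      simpa [abs_mul] using
        mul_le_one₀ (Real.abs_cos_le_one _) (abs_nonneg _) (Real.abs_cos_le_one _)
    have i2 : Integrable ((fun ω => Real.sin (θ * S k ω)) * (fun ω => Real.sin (θ * T k ω))) P := by
      refine Integrable.of_bound (by have := hS' k; have := hT k; fun_prop) 1
        (ae_of_all _ fun ω => ?_)
      simpa [abs_mul] using
        mul_le_one₀ (Real.abs_sin_le_one _) (abs_nonneg _) (Real.abs_sin_le_one _)
    rw [e]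
    filter_upwards [condExp_sub i1 i2 (ℱ k), c1, c2] with ω e0 e1 e2
    simp only [Function.comp_def] at e1 e2
    rw [e0, Pi.sub_apply, e1, e2, hsin k]
    simp
  have hs : ∀ k, P[fun ω => Real.sin (θ * X ω) | ℱ k] =ᵐ[P]
      fun ω => Real.sin (θ * S k ω) * ∫ ω, Real.cos (θ * T k ω) ∂P := by
    intro k
    have hle : MeasurableSpace.comap (T k) inferInstance ≤ mΩ := (hT k).comap_le
    have hTc : Measurable[MeasurableSpace.comap (T k) inferInstance] (T k) := comap_measurable (T k)
    have e : (fun ω => Real.sin (θ * X ω)) =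
        (fun ω => Real.sin (θ * S k ω)) * (fun ω => Real.cos (θ * T k ω)) +
        (fun ω => Real.cos (θ * S k ω)) * (fun ω => Real.sin (θ * T k ω)) := by
      funext ω
      simp only [Pi.add_apply, Pi.mul_apply, hX k ω, mul_add, Real.sin_add]
    have c1 := condExp_mul_indep (ℱ.le k) hle
      (Real.measurable_sin.comp ((hS k).const_mul θ))
      (Real.measurable_cos.comp (hTc.const_mul θ)) (hind k)
      (fun ω => Real.abs_sin_le_one _) (fun ω => Real.abs_cos_le_one _)
    have c2 := condExp_mul_indep (ℱ.le k) hle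
      (Real.measurable_cos.comp ((hS k).const_mul θ))
      (Real.measurable_sin.comp (hTc.const_mul θ)) (hind k)
      (fun ω => Real.abs_cos_le_one _) (fun ω => Real.abs_sin_le_one _)
    have i1 : Integrable ((fun ω => Real.sin (θ * S k ω)) * (fun ω => Real.cos (θ * T k ω))) P := by
      refine Integrable.of_bound (by have := hS' k; have := hT k; fun_prop) 1
        (ae_of_all _ fun ω => ?_)
      simpa [abs_mul] using
        mul_le_one₀ (Real.abs_sin_le_one _) (abs_nonneg _) (Real.abs_cos_le_one _)
    have i2 : Integrable ((fun ω => Real.cos (θ * S k ω)) * (fun ω => Real.sin (θ * T k ω))) P := by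
      refine Integrable.of_bound (by have := hS' k; have := hT k; fun_prop) 1
        (ae_of_all _ fun ω => ?_)
      simpa [abs_mul] using
        mul_le_one₀ (Real.abs_cos_le_one _) (abs_nonneg _) (Real.abs_sin_le_one _)
    rw [e]
    filter_upwards [condExp_add i1 i2 (ℱ k), c1, c2] with ω e0 e1 e2
    simp only [Function.comp_def] at e1 e2
    rw [e0, Pi.add_apply, e1, e2, hsin k]
    simp
  -- Both conditional expectations converge, hence so does `cos (θ T_k) = cos (θ X - θ S_k)`.
  have hconv : ∀ᵐ ω ∂P, ∃ l, Tendsto (fun k => Real.cos (θ * T k ω)) atTop (𝓝 l) := by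
    have hdiv : ∀ {u : ℕ → ℝ} {l : ℝ},
        Tendsto (fun k => u k * ∫ ω, Real.cos (θ * T k ω) ∂P) atTop (𝓝 l) →
        Tendsto u atTop (𝓝 l) := by
      intro u l h
      have h' := h.div hcos one_ne_zero
      rw [div_one] at h'
      refine h'.congr' ?_
      filter_upwards [hcos.eventually_ne one_ne_zero] with k hk
      exact mul_div_cancel_right₀ _ hk
    filter_upwards [tendsto_ae_condExp (ℱ := ℱ) (μ := P) (fun ω => Real.cos (θ * X ω)),
      tendsto_ae_condExp (ℱ := ℱ) (μ := P) (fun ω => Real.sin (θ * X ω)),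
      ae_all_iff.2 hc, ae_all_iff.2 hs] with ω h1 h2 h3 h4
    have g1 := hdiv (h1.congr h3)
    have g2 := hdiv (h2.congr h4)
    refine ⟨_, ((g1.const_mul (Real.cos (θ * X ω))).add
      (g2.const_mul (Real.sin (θ * X ω)))).congr fun k => ?_⟩
    rw [← Real.cos_sub, hX k ω]
    congr 1
    ring
  have hTm : ∀ k, AEMeasurable (fun ω => Real.cos (θ * T k ω)) P := fun k => by
    have := hT k
    fun_prop
  obtain ⟨L, hLm, hL⟩ := measurable_limit_of_tendsto_metrizable_ae hTm hconv
  have hL1 : ∀ᵐ ω ∂P, |L ω| ≤ 1 := by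
    filter_upwards [hL] with ω h
    exact le_of_tendsto h.abs (Eventually.of_forall fun k => Real.abs_cos_le_one _)
  have hLi : Integrable L P := Integrable.of_bound hLm.aestronglyMeasurable 1 hL1
  have hlim : Tendsto (fun k => ∫ ω, Real.cos (θ * T k ω) ∂P) atTop (𝓝 (∫ ω, L ω ∂P)) :=
    tendsto_integral_of_dominated_convergence (fun _ => 1)
      (fun k => (hTm k).aestronglyMeasurable) (integrable_const _)
      (fun k => ae_of_all _ fun ω => Real.abs_cos_le_one _) hL
  have hLint : ∫ ω, L ω ∂P = 1 := tendsto_nhds_unique hlim hcos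
  have hz : ∫ ω, (1 - L ω) ∂P = 0 := by
    rw [integral_sub (integrable_const _) hLi, hLint]
    simp
  have hnn : 0 ≤ᵐ[P] fun ω => 1 - L ω := by
    filter_upwards [hL1] with ω h
    exact sub_nonneg.2 (abs_le.1 h).2
  have hz' := (integral_eq_zero_iff_of_nonneg_ae hnn ((integrable_const _).sub hLi)).1 hz
  filter_upwards [hL, hz'] with ω h1 h2
  have : L ω = 1 := by
    have h2' : 1 - L ω = 0 := h2
    linarith
  rwa [this] at h1

/-- Convergence in law to zero of the remainders `T_k`, independent of the past, upgrades to almost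
sure convergence. -/
lemma ae_tendsto_zero_of_indep {P : Measure Ω} [IsProbabilityMeasure P] (ℱ : Filtration ℕ mΩ) (X : Ω → ℝ) (S T : ℕ → Ω → ℝ)
    (hS : ∀ k, Measurable[ℱ k] (S k)) (hT : ∀ k, Measurable (T k))
    (hX : ∀ k ω, X ω = S k ω + T k ω)
    (hind : ∀ k, Indep (MeasurableSpace.comap (T k) inferInstance) (ℱ k) P)
    (hsin : ∀ θ k, ∫ ω, Real.sin (θ * T k ω) ∂P = 0)
    (hcos : ∀ θ, Tendsto (fun k => ∫ ω, Real.cos (θ * T k ω) ∂P) atTop (𝓝 1)) :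
    ∀ᵐ ω ∂P, Tendsto (fun k => T k ω) atTop (𝓝 0) := by
  have h : ∀ θ : ℝ, ∀ᵐ ω ∂P, Tendsto (fun k => Real.cos (θ * T k ω)) atTop (𝓝 1) := fun θ =>
    ae_tendsto_cos ℱ X S T hS hT hX hind θ (hsin θ) (hcos θ)
  have hmeas : MeasurableSet {p : ℝ × Ω |
      Tendsto (fun k => Real.cos (p.1 * T k p.2)) atTop (𝓝 1)} := by
    refine measurableSet_tendsto _ fun k => ?_
    have := hT k
    fun_prop
  have h' := (Measure.ae_ae_comm (μ := gaussianReal 0 1) (ν := P)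
    (p := fun θ ω => Tendsto (fun k => Real.cos (θ * T k ω)) atTop (𝓝 1)) hmeas).1
    (ae_of_all _ h)
  filter_upwards [h'] with ω hω
  exact tendsto_zero_of_cos _ hω

end Probability

/-! ### The characteristic exponent -/

section Exponent

variable {a b : ℝ} {α : ℝ → ℝ}

/-- The majorant used for integrability and dominated convergence of `|f|^α`, where `f` is bounded
by `C` and vanishes off `B`: on `B` it raises both the base to `1 + C ≥ 1` and the exponent
to `2`. -/
lemma abs_rpow_le (ha : 0 < a) (hb : b ≤ 2) (hα : ∀ x, α x ∈ Set.Icc a b)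
    {B : Set ℝ} {C : ℝ} {f : ℝ → ℝ} (hfC : ∀ x, |f x| ≤ C)
    (hfB : ∀ x, x ∉ B → f x = 0) (x : ℝ) :
    ‖|f x| ^ α x‖ ≤ B.indicator (fun _ => (1 + C) ^ (2 : ℝ)) x := by
  have hpos : 0 < α x := ha.trans_le (hα x).1
  by_cases hx : x ∈ B
  · rw [Set.indicator_of_mem hx, Real.norm_of_nonneg (by positivity)]
    have h0 := abs_nonneg (f x)
    calc |f x| ^ α x ≤ (1 + C) ^ α x :=
          Real.rpow_le_rpow h0 (by linarith [hfC x]) hpos.le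
      _ ≤ (1 + C) ^ (2 : ℝ) :=
          Real.rpow_le_rpow_of_exponent_le (by linarith [hfC x]) ((hα x).2.trans hb)
  · simp [hfB x hx, Real.zero_rpow hpos.ne', hx]

lemma integrable_bound {B : Set ℝ} (hB : MemE0 B) (C : ℝ) :
    Integrable (B.indicator fun _ : ℝ => (1 + C) ^ (2 : ℝ)) :=
  (integrable_indicator_iff hB.1).2 (integrableOn_const hB.2.ne)

lemma integrable_abs_rpow (ha : 0 < a) (hb : b ≤ 2) (hαm : Measurable α)
    (hα : ∀ x, α x ∈ Set.Icc a b) {B : Set ℝ} (hB : MemE0 B) {C : ℝ} {f : ℝ → ℝ}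
    (hf : Measurable f) (hfC : ∀ x, |f x| ≤ C) (hfB : ∀ x, x ∉ B → f x = 0) :
    Integrable (fun x => |f x| ^ α x) :=
  (integrable_bound hB C).mono' ((hf.abs.pow hαm).aestronglyMeasurable)
    (ae_of_all _ (abs_rpow_le ha hb hα hfC hfB))

/-- The exponent is additive over functions with disjoint supports, because `0 ^ α x = 0`. -/
lemma integral_abs_rpow_add (ha : 0 < a) (hb : b ≤ 2) (hαm : Measurable α)
    (hα : ∀ x, α x ∈ Set.Icc a b) {B : Set ℝ} (hB : MemE0 B) {C D : ℝ} {f g : ℝ → ℝ}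
    (hf : Measurable f) (hfC : ∀ x, |f x| ≤ C) (hfB : ∀ x, x ∉ B → f x = 0)
    (hg : Measurable g) (hgC : ∀ x, |g x| ≤ D) (hgB : ∀ x, x ∉ B → g x = 0)
    (hfg : ∀ x, f x = 0 ∨ g x = 0) :
    ∫ x, |f x + g x| ^ α x = (∫ x, |f x| ^ α x) + ∫ x, |g x| ^ α x := by
  rw [← integral_add (integrable_abs_rpow ha hb hαm hα hB hf hfC hfB)
    (integrable_abs_rpow ha hb hαm hα hB hg hgC hgB)]
  refine integral_congr_ae (ae_of_all _ fun x => ?_)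
  have hpos : 0 < α x := ha.trans_le (hα x).1
  rcases hfg x with h | h <;> simp [h, Real.zero_rpow hpos.ne']

end Exponent

/-! ### Indicators of the tails -/

section Remainder

variable {A : ℕ → Set ℝ}

/-- The indicator of `⋃ j, A j` minus those of `A 0, …, A (k - 1)`; for disjoint `A j` this is the
indicator of the tail `⋃ j ≥ k, A j`. -/
def remainder (A : ℕ → Set ℝ) (k : ℕ) (x : ℝ) : ℝ :=
  (⋃ j, A j).indicator (fun _ => (1 : ℝ)) x -
    ∑ j : Fin k, (A j).indicator (fun _ => (1 : ℝ)) x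

lemma remainder_eq_zero (hdisj : Pairwise (Function.onFun Disjoint A)) {k i : ℕ} (hi : i < k)
    {x : ℝ} (hx : x ∈ A i) : remainder A k x = 0 := by
  have hB : x ∈ ⋃ j, A j := Set.mem_iUnion.2 ⟨i, hx⟩
  rw [remainder, Set.indicator_of_mem hB, Finset.sum_eq_single (⟨i, hi⟩ : Fin k)]
  · rw [Set.indicator_of_mem hx, sub_self]
  · intro j _ hj
    refine Set.indicator_of_notMem (fun hxj => ?_) _
    exact Set.disjoint_left.1 (hdisj (fun h => hj (Fin.ext h))) hxj hx
  · simp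

lemma remainder_eq_indicator {k : ℕ} {x : ℝ} (hx : ∀ i < k, x ∉ A i) :
    remainder A k x = (⋃ j, A j).indicator (fun _ => (1 : ℝ)) x := by
  rw [remainder, Finset.sum_eq_zero, sub_zero]
  exact fun j _ => Set.indicator_of_notMem (hx j j.2) _

lemma remainder_eq_zero_of_notMem (k : ℕ) {x : ℝ} (hx : x ∉ ⋃ j, A j) : remainder A k x = 0 := by
  rw [remainder_eq_indicator fun i _ hi => hx (Set.mem_iUnion.2 ⟨i, hi⟩),
    Set.indicator_of_notMem hx]

lemma abs_remainder_le (hdisj : Pairwise (Function.onFun Disjoint A)) (k : ℕ) (x : ℝ) :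
    |remainder A k x| ≤ 1 := by
  by_cases h : ∃ i < k, x ∈ A i
  · obtain ⟨i, hi, hx⟩ := h
    simp [remainder_eq_zero hdisj hi hx]
  · push Not at h
    rw [remainder_eq_indicator h]
    by_cases hx : x ∈ ⋃ j, A j
    · simp [Set.indicator_of_mem hx]
    · simp [Set.indicator_of_notMem hx]

lemma sum_eq_zero_or_remainder_eq_zero (hdisj : Pairwise (Function.onFun Disjoint A)) {k : ℕ}
    (c : Fin k → ℝ) (x : ℝ) :
    ∑ j, c j * (A j).indicator (fun _ => (1 : ℝ)) x = 0 ∨ remainder A k x = 0 := by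
  by_cases h : ∃ i < k, x ∈ A i
  · obtain ⟨i, hi, hx⟩ := h
    exact Or.inr (remainder_eq_zero hdisj hi hx)
  · push Not at h
    refine Or.inl (Finset.sum_eq_zero fun j _ => ?_)
    rw [Set.indicator_of_notMem (h j j.2), mul_zero]

lemma measurable_remainder (hA : ∀ j, MemE0 (A j)) (k : ℕ) : Measurable (remainder A k) := by
  unfold remainder
  refine Measurable.sub (measurable_const.indicator (.iUnion fun j => (hA j).1)) ?_
  exact Finset.measurable_sum _ fun j _ => measurable_const.indicator (hA j).1

lemma eventually_remainder_eq_zero (hdisj : Pairwise (Function.onFun Disjoint A)) (x : ℝ) :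
    ∀ᶠ k in atTop, remainder A k x = 0 := by
  by_cases hx : x ∈ ⋃ j, A j
  · obtain ⟨i, hi⟩ := Set.mem_iUnion.1 hx
    filter_upwards [eventually_gt_atTop i] with k hk
    exact remainder_eq_zero hdisj hk hi
  · exact Eventually.of_forall fun k => remainder_eq_zero_of_notMem k hx

/-- The exponent of the remainder tends to zero, by dominated convergence. -/
lemma tendsto_integral_remainder {a b : ℝ} {α : ℝ → ℝ} (ha : 0 < a) (hb : b ≤ 2)
    (hαm : Measurable α) (hα : ∀ x, α x ∈ Set.Icc a b) (hA : ∀ j, MemE0 (A j))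
    (hdisj : Pairwise (Function.onFun Disjoint A)) (hB : MemE0 (⋃ j, A j)) (θ : ℝ) :
    Tendsto (fun k => ∫ x, |θ * remainder A k x| ^ α x) atTop (𝓝 0) := by
  have h : Tendsto (fun k => ∫ x, |θ * remainder A k x| ^ α x) atTop (𝓝 (∫ _x : ℝ, (0 : ℝ))) := by
    refine tendsto_integral_of_dominated_convergence _ (fun k => ?_) (integrable_bound hB |θ|)
      (fun k => ae_of_all _ (abs_rpow_le ha hb hα (fun x => ?_) fun x hx => ?_))
      (ae_of_all _ fun x => ?_)
    · exact (((measurable_remainder hA k).const_mul θ).abs.pow hαm).aestronglyMeasurable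
    · rw [abs_mul]
      exact mul_le_of_le_one_right (abs_nonneg _) (abs_remainder_le hdisj k x)
    · rw [remainder_eq_zero_of_notMem k hx, mul_zero]
    · refine tendsto_const_nhds.congr' ?_
      filter_upwards [eventually_remainder_eq_zero hdisj x] with k hk
      simp [hk, Real.zero_rpow (ha.trans_le (hα x).1).ne']
  simpa using h

end Remainder

/-- the α(x)-multistable random measure is σ-additive: for pairwise
disjoint sets `A_j ∈ E₀` whose union is in `E₀`, `Σ_{j<k} M(A_j) → M(∪ A_j)` a.s. -/
theorem multistable_measure_sigma_additive {Ω : Type*} [MeasurableSpace Ω]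
    (P : Measure Ω) [IsProbabilityMeasure P]
    (a b : ℝ) (ha : 0 < a) (hab : a ≤ b) (hb : b ≤ 2)
    (α : ℝ → ℝ) (hαm : Measurable α) (hα : ∀ x, α x ∈ Set.Icc a b)
    (M : Set ℝ → Ω → ℝ) (hMmeas : ∀ A, MemE0 A → Measurable (M A))
    (hCF : ∀ (d : ℕ) (A : Fin d → Set ℝ), (∀ j, MemE0 (A j)) →
      ∀ θ : Fin d → ℝ,
        ∫ ω, Complex.exp (Complex.I * ((∑ j, θ j * M (A j) ω : ℝ) : ℂ)) ∂P =
          ((Real.exp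
            (-(∫ x : ℝ, |∑ j, θ j * (A j).indicator (fun _ => (1:ℝ)) x| ^ α x)) : ℝ) : ℂ))
    (A : ℕ → Set ℝ) (hA : ∀ j, MemE0 (A j))
    (hdisj : Pairwise (Function.onFun Disjoint A))
    (hB : MemE0 (⋃ j, A j)) :
    ∀ᵐ ω ∂P, Tendsto (fun k => ∑ j ∈ Finset.range k, M (A j) ω) atTop
      (𝓝 (M (⋃ j, A j) ω)) := by

  let T : ℕ → Ω → ℝ := fun k ω => M (⋃ j, A j) ω - ∑ j ∈ Finset.range k, M (A j) ω
  have hTm : ∀ k, Measurable (T k) := fun k =>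
    (hMmeas _ hB).sub (Finset.measurable_sum _ fun j _ => hMmeas _ (hA j))
  -- The joint characteristic function of `M (A 0), …, M (A (k - 1))` and the remainder `T k`.
  have key : ∀ (k : ℕ) (c : Fin k → ℝ) (t : ℝ),
      ∫ ω, Complex.exp (Complex.I * ((∑ j, c j * M (A j) ω + t * T k ω : ℝ) : ℂ)) ∂P =
        ((Real.exp (-∫ x, |∑ j, c j * (A j).indicator (fun _ => (1 : ℝ)) x +
          t * remainder A k x| ^ α x) : ℝ) : ℂ) := by
    intro k c t
    have h := hCF (k + 1) (Fin.cons (⋃ j, A j) fun j : Fin k => A j)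
      (fun j => Fin.cases hB (fun i => hA i) j) (Fin.cons t fun j => c j - t)
    simp only [Fin.sum_univ_succ, Fin.cons_zero, Fin.cons_succ] at h
    have e : ∀ (y : ℝ) (z : Fin k → ℝ), t * y + ∑ j, (c j - t) * z j =
        ∑ j, c j * z j + t * (y - ∑ j, z j) := by
      intro y z
      simp only [sub_mul, Finset.sum_sub_distrib, Finset.mul_sum, mul_sub]
      ring
    have h1 : ∀ ω, ∑ j, c j * M (A j) ω + t * T k ω =
        t * M (⋃ j, A j) ω + ∑ j : Fin k, (c j - t) * M (A j) ω := by
      intro ω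
      rw [e]
      simp only [T, Finset.sum_range]
    have h2 : ∀ x, ∑ j, c j * (A j).indicator (fun _ => (1 : ℝ)) x + t * remainder A k x =
        t * (⋃ j, A j).indicator (fun _ => (1 : ℝ)) x +
          ∑ j : Fin k, (c j - t) * (A j).indicator (fun _ => (1 : ℝ)) x := by
      intro x
      rw [e, remainder]
    simp only [h1, h2]
    exact h
  -- The tail is disjoint from `A 0, …, A (k - 1)`, so the exponent is additive.
  have hsplit : ∀ (k : ℕ) (c : Fin k → ℝ) (t : ℝ),
      ∫ x, |∑ j, c j * (A j).indicator (fun _ => (1 : ℝ)) x + t * remainder A k x| ^ α x =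
        (∫ x, |∑ j, c j * (A j).indicator (fun _ => (1 : ℝ)) x| ^ α x) +
          ∫ x, |t * remainder A k x| ^ α x := by
    intro k c t
    refine integral_abs_rpow_add ha hb hαm hα hB (C := ∑ j, |c j|) (D := |t|) ?_ (fun x => ?_)
      (fun x hx => ?_) ?_ (fun x => ?_) (fun x hx => ?_) (fun x => ?_)
    · exact Finset.measurable_sum _ fun j _ =>
        (measurable_const.indicator (hA j).1).const_mul _
    · refine (Finset.abs_sum_le_sum_abs _ _).trans (Finset.sum_le_sum fun j _ => ?_)
      rw [abs_mul]
      refine mul_le_of_le_one_right (abs_nonneg _) ?_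
      by_cases hx : x ∈ A j
      · simp [Set.indicator_of_mem hx]
      · simp [Set.indicator_of_notMem hx]
    · refine Finset.sum_eq_zero fun j _ => ?_
      rw [Set.indicator_of_notMem fun h => hx (Set.mem_iUnion.2 ⟨j, h⟩), mul_zero]
    · exact (measurable_remainder hA k).const_mul t
    · rw [abs_mul]
      exact mul_le_of_le_one_right (abs_nonneg _) (abs_remainder_le hdisj k x)
    · rw [remainder_eq_zero_of_notMem k hx, mul_zero]
    · exact (sum_eq_zero_or_remainder_eq_zero hdisj c x).imp_right fun h => by rw [h, mul_zero]
  let V : (k : ℕ) → Ω → EuclideanSpace ℝ (Fin k) := fun k ω => WithLp.toLp 2 fun j => M (A j) ω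
  have hVc : ∀ (k j : ℕ), j < k →
      Measurable[MeasurableSpace.comap (V k) inferInstance] (M (A j)) := by
    intro k j hj
    have h1 : Measurable fun v : EuclideanSpace ℝ (Fin k) => v ⟨j, hj⟩ := by fun_prop
    exact h1.comp (comap_measurable (V k))
  have hVm : ∀ k, Measurable (V k) := fun k =>
    (WithLp.measurable_toLp 2 _).comp (measurable_pi_lambda _ fun j => hMmeas _ (hA j))
  let ℱ : Filtration ℕ (inferInstance : MeasurableSpace Ω) :=
    { seq := fun k => MeasurableSpace.comap (V k) inferInstance
      mono' := by
        intro k l hkl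
        have hg : Measurable fun v : EuclideanSpace ℝ (Fin l) =>
            (WithLp.toLp 2 fun j : Fin k => v (Fin.castLE hkl j) : EuclideanSpace ℝ (Fin k)) := by
          fun_prop
        rintro _ ⟨s, hs, rfl⟩
        exact ⟨_, hg hs, rfl⟩
      le' := fun k => (hVm k).comap_le }
  have hind : ∀ k, IndepFun (V k) (T k) P := by
    intro k
    rw [indepFun_iff_charFun_prod (hVm k).aemeasurable (hTm k).aemeasurable]
    intro s
    have hV := hVm k
    have hT := hTm k
    rw [charFun_apply, charFun_apply, charFun_apply, integral_map (by fun_prop) (by fun_prop),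
      integral_map (by fun_prop) (by fun_prop), integral_map (by fun_prop) (by fun_prop)]
    have hin : ∀ ω, inner ℝ (V k ω) s.fst = ∑ j, s.fst j * M (A j) ω := by
      intro ω
      simp [V, PiLp.inner_apply]
    have k1 := key k (fun j => s.fst j) s.snd
    have k2 := key k (fun j => s.fst j) 0
    have k3 := key k 0 s.snd
    rw [hsplit, neg_add, Real.exp_add, Complex.ofReal_mul] at k1
    simp only [zero_mul, add_zero, Pi.zero_apply, Finset.sum_const_zero, zero_add] at k2 k3
    rw [← k2, ← k3] at k1
    convert k1 using 1
    · refine integral_congr_ae (ae_of_all _ fun ω => ?_)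
      have e : inner ℝ (WithLp.toLp 2 (V k ω, T k ω)) s =
          ∑ j, s.fst j * M (A j) ω + s.snd * T k ω := by
        rw [WithLp.prod_inner_apply]
        exact congrArg₂ (· + ·) (hin ω) rfl
      simp only
      rw [mul_comm Complex.I, e]
    · congr 1
      · refine integral_congr_ae (ae_of_all _ fun ω => ?_)
        simp only
        rw [mul_comm Complex.I, ← hin ω]
        rfl
      · refine integral_congr_ae (ae_of_all _ fun ω => ?_)
        simp only
        rw [mul_comm Complex.I]
        simp
  have hchar : ∀ (θ : ℝ) (k : ℕ), ∫ ω, Complex.exp (((θ * T k ω : ℝ) : ℂ) * Complex.I) ∂P =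
      ((Real.exp (-∫ x, |θ * remainder A k x| ^ α x) : ℝ) : ℂ) := by
    intro θ k
    have h := key k 0 θ
    simp only [Pi.zero_apply, zero_mul, Finset.sum_const_zero, zero_add] at h
    rw [← h]
    simp only [mul_comm Complex.I]
  have hint : ∀ (θ : ℝ) (k : ℕ),
      Integrable (fun ω => Complex.exp (((θ * T k ω : ℝ) : ℂ) * Complex.I)) P := by
    intro θ k
    have := hTm k
    refine Integrable.of_bound (by fun_prop) 1 (ae_of_all _ fun ω => ?_)
    rw [Complex.norm_exp_ofReal_mul_I]
  have hsin : ∀ θ k, ∫ ω, Real.sin (θ * T k ω) ∂P = 0 := by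
    intro θ k
    have h := integral_im (hint θ k)
    simp only [RCLike.im_to_complex, Complex.exp_ofReal_mul_I_im, hchar, Complex.ofReal_im] at h
    exact h
  have hcos : ∀ θ, Tendsto (fun k => ∫ ω, Real.cos (θ * T k ω) ∂P) atTop (𝓝 1) := by
    intro θ
    have h : ∀ k, ∫ ω, Real.cos (θ * T k ω) ∂P =
        Real.exp (-∫ x, |θ * remainder A k x| ^ α x) := by
      intro k
      have h := integral_re (hint θ k)
      simp only [RCLike.re_to_complex, Complex.exp_ofReal_mul_I_re, hchar, Complex.ofReal_re] at h
      exact h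
    simp only [h]
    have h0 := (tendsto_integral_remainder ha hb hαm hα hA hdisj hB θ).neg.rexp
    simpa using h0
  have hfin := ae_tendsto_zero_of_indep ℱ (M (⋃ j, A j))
    (fun k ω => ∑ j ∈ Finset.range k, M (A j) ω) T
    (fun k => Finset.measurable_sum _ fun j hj => hVc k j (Finset.mem_range.1 hj)) hTm
    (fun k ω => by simp only [T]; ring)
    (fun k => (IndepFun_iff_Indep _ _ _).1 (hind k).symm) hsin hcos
  filter_upwards [hfin] with ω hω
  have h := hω.const_sub (M (⋃ j, A j) ω)
  simpa [T] using h
end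
end

section
/- Let 0 < a ≤ b ≤ 2 and let αₙ, α : ℝ → [a,b] be Lebesgue measurable with αₙ(x) → α(x) for Lebesgue-almost every x ∈ ℝ. Let m ∈ ℕ and A₁,…,A_m ∈ E₀, and let μₙ (respectively μ) be the probability measure on ℝ^m whose characteristic function is θ ↦ exp(−∫_ℝ |Σ_{j=1}^m θ_j 1_{A_j}(x)|^{αₙ(x)} dx) (respectively with exponent α(x)). Then μₙ converges weakly (in distribution) to μ as n → ∞; that is, (M_{αₙ}(A₁),…,M_{αₙ}(A_m)) converges in distribution to (M_α(A₁),…,M_α(A_m)). -/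
/-!
By Lévy's continuity theorem, weak convergence follows from pointwise convergence of
characteristic functions, i.e. from `∫ |f|^{αₙ(x)} dx → ∫ |f|^{α(x)} dx` for every simple function
`f = Σ θ_j 1_{A_j}` (`tendsto_integral_rpow_simple`). This holds by dominated convergence: `f`
vanishes off the set `⋃ A_j` of finite measure and is bounded by `C = Σ |θ_j|`, so
`(1 + C)² · 1_{⋃ A_j}` dominates all the integrands (`abs_rpow_le_indicator`).
Lévy's theorem in Mathlib is for inner product spaces, so it is applied to the push-forwards of
the measures to `EuclideanSpace ℝ (Fin m)` (`tendsto_integral_of_tendsto_charFun_pi`).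
-/

open MeasureTheory Filter Set Topology ProbabilityTheory BoundedContinuousFunction

noncomputable section

/-- The domination used in the dominated convergence argument, for an exponent `p ∈ (0, 2]`. Off
`⋃ A_j` the left side is `0 ^ p`, which is `0` only because `p ≠ 0`. -/
lemma abs_rpow_le_indicator {m : ℕ} (A : Fin m → Set ℝ) (θ : Fin m → ℝ) {p : ℝ} (hp : 0 < p)
    (hp2 : p ≤ 2) (x : ℝ) :
    |∑ j, θ j * (A j).indicator (fun _ => (1 : ℝ)) x| ^ p ≤
      (⋃ j, A j).indicator (fun _ => (1 + ∑ j, |θ j|) ^ (2 : ℝ)) x := by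
  by_cases hx : x ∈ ⋃ j, A j
  · rw [Set.indicator_of_mem hx]
    have hC : |∑ j, θ j * (A j).indicator (fun _ => (1 : ℝ)) x| ≤ ∑ j, |θ j| := by
      refine (Finset.abs_sum_le_sum_abs _ _).trans (Finset.sum_le_sum fun j _ => ?_)
      by_cases h : x ∈ A j <;> simp [h]
    have h0 : 0 ≤ ∑ j, |θ j| := Finset.sum_nonneg fun j _ => abs_nonneg _
    calc |∑ j, θ j * (A j).indicator (fun _ => (1 : ℝ)) x| ^ p
        ≤ (1 + ∑ j, |θ j|) ^ p :=
          Real.rpow_le_rpow (abs_nonneg _) (by linarith) hp.le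
      _ ≤ (1 + ∑ j, |θ j|) ^ (2 : ℝ) :=
          Real.rpow_le_rpow_of_exponent_le (by linarith) hp2
  · have h : ∀ j, x ∉ A j := by simpa using hx
    simp [h, Real.zero_rpow hp.ne', hx]

/-- Convergence of the exponents of the characteristic functions. -/
lemma tendsto_integral_rpow_simple {a b : ℝ} (ha : 0 < a) (hb : b ≤ 2)
    {αn : ℕ → ℝ → ℝ} (hαnm : ∀ n, Measurable (αn n)) (hαn : ∀ n x, αn n x ∈ Set.Icc a b)
    {α : ℝ → ℝ} (hα : ∀ x, α x ∈ Set.Icc a b)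
    (hconv : ∀ᵐ x ∂(volume : Measure ℝ), Tendsto (fun n => αn n x) atTop (𝓝 (α x)))
    {m : ℕ} {A : Fin m → Set ℝ} (hA : ∀ j, MemE0 (A j)) (θ : Fin m → ℝ) :
    Tendsto (fun n => ∫ x : ℝ, |∑ j, θ j * (A j).indicator (fun _ => (1 : ℝ)) x| ^ αn n x) atTop
      (𝓝 (∫ x : ℝ, |∑ j, θ j * (A j).indicator (fun _ => (1 : ℝ)) x| ^ α x)) := by
  have hfm : Measurable fun x : ℝ => |∑ j, θ j * (A j).indicator (fun _ => (1 : ℝ)) x| := by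
    have (j : Fin m) : Measurable ((A j).indicator fun _ : ℝ => (1 : ℝ)) :=
      measurable_const.indicator (hA j).1
    fun_prop
  refine tendsto_integral_of_dominated_convergence
    ((⋃ j, A j).indicator fun _ => (1 + ∑ j, |θ j|) ^ (2 : ℝ))
    (fun n => (hfm.pow (hαnm n)).aestronglyMeasurable) ?_ (fun n => ae_of_all _ fun x => ?_) ?_
  · rw [integrable_indicator_iff (MeasurableSet.iUnion fun j => (hA j).1)]
    refine integrableOn_const (ne_of_lt ?_)
    exact (measure_iUnion_le _).trans_lt (by
      rw [tsum_fintype]; exact ENNReal.sum_lt_top.2 fun j _ => (hA j).2)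
  · rw [Real.norm_of_nonneg (Real.rpow_nonneg (abs_nonneg _) _)]
    exact abs_rpow_le_indicator A θ (ha.trans_le (hαn n x).1) ((hαn n x).2.trans hb) x
  · filter_upwards [hconv] with x hx
    -- The exponents stay away from `0`, so `(s, p) ↦ s ^ p` is continuous at the limit even if
    -- the base vanishes.
    exact tendsto_const_nhds.rpow hx (Or.inr (ha.trans_le (hα x).1))

/-- Lévy's continuity theorem on `Fin m → ℝ`, with the characteristic function written out in
coordinates. -/
lemma tendsto_integral_of_tendsto_charFun_pi {m : ℕ} (μn : ℕ → Measure (Fin m → ℝ))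
    [∀ n, IsProbabilityMeasure (μn n)] (μ : Measure (Fin m → ℝ)) [IsProbabilityMeasure μ]
    (h : ∀ θ : Fin m → ℝ, Tendsto
      (fun n => ∫ y, Complex.exp (Complex.I * ((∑ j, θ j * y j : ℝ) : ℂ)) ∂(μn n)) atTop
      (𝓝 (∫ y, Complex.exp (Complex.I * ((∑ j, θ j * y j : ℝ) : ℂ)) ∂μ)))
    (F : (Fin m → ℝ) →ᵇ ℝ) :
    Tendsto (fun n => ∫ y, F y ∂(μn n)) atTop (𝓝 (∫ y, F y ∂μ)) := by
  let e := MeasurableEquiv.toLp 2 (Fin m → ℝ)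
  have hchar (ν : Measure (Fin m → ℝ)) (t : EuclideanSpace ℝ (Fin m)) :
      charFun (ν.map e) t =
        ∫ y, Complex.exp (Complex.I * ((∑ j, t j * y j : ℝ) : ℂ)) ∂ν := by
    rw [charFun_apply, MeasureTheory.integral_map_equiv]
    refine integral_congr_ae (ae_of_all _ fun y => ?_)
    simp [e, PiLp.inner_apply, mul_comm]
  have hprob (ν : Measure (Fin m → ℝ)) [IsProbabilityMeasure ν] :
      IsProbabilityMeasure (ν.map e) :=
    Measure.isProbabilityMeasure_map e.measurable.aemeasurable
  let νn : ℕ → ProbabilityMeasure (EuclideanSpace ℝ (Fin m)) := fun n => ⟨_, hprob (μn n)⟩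
  let ν : ProbabilityMeasure (EuclideanSpace ℝ (Fin m)) := ⟨_, hprob μ⟩
  have hν : Tendsto νn atTop (𝓝 ν) := by
    refine ProbabilityMeasure.tendsto_iff_tendsto_charFun.2 fun t => ?_
    simp only [νn, ν, ProbabilityMeasure.coe_mk, hchar]
    exact h t
  have hF := ProbabilityMeasure.tendsto_iff_forall_integral_tendsto.1 hν
    (F.compContinuous ⟨WithLp.ofLp, PiLp.continuous_ofLp 2 _⟩)
  simp only [νn, ν, ProbabilityMeasure.coe_mk, MeasureTheory.integral_map_equiv] at hF
  exact hF

/-- if `αₙ → α` a.e. then the finite-dimensional distributions of the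
`αₙ(x)`-multistable measures converge weakly to those of the `α(x)`-multistable
measure. -/
theorem multistable_measure_fdd_convergence (a b : ℝ) (ha : 0 < a) (hab : a ≤ b) (hb : b ≤ 2)
    (αn : ℕ → ℝ → ℝ) (hαnm : ∀ n, Measurable (αn n)) (hαn : ∀ n x, αn n x ∈ Set.Icc a b)
    (α : ℝ → ℝ) (hαm : Measurable α) (hα : ∀ x, α x ∈ Set.Icc a b)
    (hconv : ∀ᵐ x ∂(volume : Measure ℝ), Tendsto (fun n => αn n x) atTop (𝓝 (α x)))
    (m : ℕ) (A : Fin m → Set ℝ) (hA : ∀ j, MemE0 (A j))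
    (μn : ℕ → Measure (Fin m → ℝ)) (hμnp : ∀ n, IsProbabilityMeasure (μn n))
    (hμnCF : ∀ (n : ℕ) (θ : Fin m → ℝ),
      ∫ y, Complex.exp (Complex.I * ((∑ j, θ j * y j : ℝ) : ℂ)) ∂(μn n) =
        ((Real.exp
          (-(∫ x : ℝ, |∑ j, θ j * (A j).indicator (fun _ => (1:ℝ)) x| ^ αn n x)) : ℝ) : ℂ))
    (μ : Measure (Fin m → ℝ)) (hμp : IsProbabilityMeasure μ)
    (hμCF : ∀ θ : Fin m → ℝ,
      ∫ y, Complex.exp (Complex.I * ((∑ j, θ j * y j : ℝ) : ℂ)) ∂μ =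
        ((Real.exp
          (-(∫ x : ℝ, |∑ j, θ j * (A j).indicator (fun _ => (1:ℝ)) x| ^ α x)) : ℝ) : ℂ)) :
    ∀ F : (Fin m → ℝ) →ᵇ ℝ,
      Tendsto (fun n => ∫ y, F y ∂(μn n)) atTop (𝓝 (∫ y, F y ∂μ)) := by
  refine tendsto_integral_of_tendsto_charFun_pi μn μ fun θ => ?_
  simp only [hμnCF, hμCF]
  exact (Complex.continuous_ofReal.comp Real.continuous_exp).continuousAt.tendsto.comp
    (tendsto_integral_rpow_simple ha hb hαnm hαn hα hconv hA θ).neg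
end
end

section
/- Let 0 < a ≤ b ≤ 2, let α : ℝ → [a,b] be continuous, and for each n ∈ ℕ define αₙ : ℝ → [a,b] by αₙ(x) = α(r2^{-n}) for x ∈ [r2^{-n}, (r+1)2^{-n}), r ∈ ℤ. Then for every m ∈ ℕ and all A₁,…,A_m ∈ E₀, the probability measures μₙ on ℝ^m with characteristic functions θ ↦ exp(−∫_ℝ |Σ_{j=1}^m θ_j 1_{A_j}(x)|^{αₙ(x)} dx) converge weakly as n → ∞ to the probability measure μ with characteristic function θ ↦ exp(−∫_ℝ |Σ_{j=1}^m θ_j 1_{A_j}(x)|^{α(x)} dx); that is, M_{αₙ} converges to M_α in finite-dimensional distributions. -/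
/-!
By Lévy's continuity theorem, weak convergence of probability measures on a finite-dimensional
space follows from pointwise convergence of their characteristic functions. Fix `θ` and put
`f = ∑ j, θ j • 1_{A j}`. The dyadic point `⌊2ⁿ x⌋ / 2ⁿ` tends to `x`, so by continuity of `α` the
integrands `|f x| ^ α (⌊2ⁿ x⌋ / 2ⁿ)` tend to `|f x| ^ α x` at every `x`. With `K = ∑ j, |θ j|`, they
are dominated by `(1 + K) ^ b * 1_{⋃ j, A j}`, which is integrable because the `A j` have finite
measure; this uses that the exponents are positive, so that the integrands vanish where `f` does.
Dominated convergence gives convergence of the exponents, hence of the characteristic functions.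

Mathlib's version of Lévy's theorem is for inner product spaces, so the measures are transported to
`EuclideanSpace ℝ (Fin m)` along `WithLp.toLp 2`.
-/

open MeasureTheory Filter Set Topology ProbabilityTheory BoundedContinuousFunction

noncomputable section

lemma tendsto_dyadic_floor (x : ℝ) :
    Tendsto (fun n : ℕ => (⌊x * 2 ^ n⌋ : ℝ) / 2 ^ n) atTop (𝓝 x) := by
  have h2 : Tendsto (fun n : ℕ => (2 : ℝ) ^ n) atTop atTop :=
    tendsto_pow_atTop_atTop_of_one_lt one_lt_two
  have hlow : Tendsto (fun n : ℕ => x - ((2 : ℝ) ^ n)⁻¹) atTop (𝓝 x) := by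
    simpa using (tendsto_const_nhds (x := x)).sub h2.inv_tendsto_atTop
  refine tendsto_of_tendsto_of_tendsto_of_le_of_le hlow tendsto_const_nhds ?_ ?_
  · intro n
    have hp : (0 : ℝ) < 2 ^ n := by positivity
    have h := Int.sub_one_lt_floor (x * 2 ^ n)
    change x - ((2 : ℝ) ^ n)⁻¹ ≤ (⌊x * 2 ^ n⌋ : ℝ) / 2 ^ n
    rw [le_div_iff₀ hp, sub_mul, inv_mul_cancel₀ hp.ne']
    exact h.le
  · intro n
    have hp : (0 : ℝ) < 2 ^ n := by positivity
    change (⌊x * 2 ^ n⌋ : ℝ) / 2 ^ n ≤ x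
    rw [div_le_iff₀ hp]
    exact Int.floor_le _

/-- Convergence of the exponents of the characteristic functions, by dominated convergence. -/
lemma tendsto_integral_rpow_dyadic {a b : ℝ} (ha : 0 < a)
    {α : ℝ → ℝ} (hαc : Continuous α) (hα : ∀ x, α x ∈ Set.Icc a b)
    {m : ℕ} {A : Fin m → Set ℝ} (hA : ∀ j, MemE0 (A j)) (θ : Fin m → ℝ) :
    Tendsto (fun n : ℕ => ∫ x : ℝ, |∑ j, θ j * (A j).indicator (fun _ => (1:ℝ)) x| ^
        α ((⌊x * 2 ^ n⌋ : ℝ) / 2 ^ n)) atTop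
      (𝓝 (∫ x : ℝ, |∑ j, θ j * (A j).indicator (fun _ => (1:ℝ)) x| ^ α x)) := by
  set f : ℝ → ℝ := fun x => ∑ j, θ j * (A j).indicator (fun _ => (1:ℝ)) x with hf
  have hfm : Measurable f :=
    Finset.measurable_sum _ fun j _ => (measurable_const.indicator (hA j).1).const_mul _
  set K : ℝ := ∑ j, |θ j|
  have hK : 0 ≤ K := Finset.sum_nonneg fun j _ => abs_nonneg _
  have hfK : ∀ x, |f x| ≤ K := fun x =>
    (Finset.abs_sum_le_sum_abs _ _).trans <| Finset.sum_le_sum fun j _ => by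
      by_cases hx : x ∈ A j <;> simp [hx]
  have hf0 : ∀ x, x ∉ ⋃ j, A j → f x = 0 := fun x hx => by
    simp only [Set.mem_iUnion, not_exists] at hx
    simp [hf, hx]
  have hU : MeasurableSet (⋃ j, A j) := MeasurableSet.iUnion fun j => (hA j).1
  have hUfin : volume (⋃ j, A j) ≠ ⊤ := by
    refine ((measure_iUnion_fintype_le volume A).trans_lt ?_).ne
    exact ENNReal.sum_lt_top.2 fun j _ => (hA j).2
  refine tendsto_integral_of_dominated_convergence
    ((⋃ j, A j).indicator fun _ => (1 + K) ^ b) ?_ ?_ ?_ ?_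
  · intro n
    have hfl : Measurable fun x : ℝ => (⌊x * 2 ^ n⌋ : ℝ) / 2 ^ n := by fun_prop
    exact ((continuous_abs.measurable.comp hfm).pow
      (hαc.measurable.comp hfl)).aestronglyMeasurable
  · exact (integrable_indicator_iff hU).2 (integrableOn_const hUfin)
  · intro n
    refine .of_forall fun x => ?_
    obtain ⟨hlo, hhi⟩ := hα ((⌊x * 2 ^ n⌋ : ℝ) / 2 ^ n)
    rw [Real.norm_of_nonneg (Real.rpow_nonneg (abs_nonneg _) _)]
    by_cases hx : x ∈ ⋃ j, A j
    · rw [Set.indicator_of_mem hx]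
      -- the base is enlarged to `1 + K ≥ 1` so that the power is monotone in the exponent
      calc |f x| ^ α ((⌊x * 2 ^ n⌋ : ℝ) / 2 ^ n)
          ≤ (1 + K) ^ α ((⌊x * 2 ^ n⌋ : ℝ) / 2 ^ n) :=
            Real.rpow_le_rpow (abs_nonneg _) (by linarith [hfK x]) (ha.le.trans hlo)
        _ ≤ (1 + K) ^ b := Real.rpow_le_rpow_of_exponent_le (by linarith) hhi
    · rw [Set.indicator_of_notMem hx]
      change |f x| ^ _ ≤ _
      rw [hf0 x hx, abs_zero, Real.zero_rpow (ha.trans_le hlo).ne']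
  · refine .of_forall fun x => ?_
    refine Tendsto.rpow tendsto_const_nhds ((hαc.tendsto x).comp (tendsto_dyadic_floor x)) ?_
    exact Or.inr (ha.trans_le (hα x).1)

/-- The characteristic function of a measure on `Fin m → ℝ`, transported to Euclidean space. -/
lemma charFun_map_toLp {m : ℕ} (ν : Measure (Fin m → ℝ)) (t : EuclideanSpace ℝ (Fin m)) :
    charFun (ν.map (WithLp.toLp 2)) t =
      ∫ y, Complex.exp (Complex.I * ((∑ j, t j * y j : ℝ) : ℂ)) ∂ν := by
  rw [charFun_apply, integral_map (by fun_prop) (by fun_prop)]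
  refine integral_congr_ae (.of_forall fun y => ?_)
  simp only [PiLp.inner_apply, RCLike.inner_apply, conj_trivial]
  rw [mul_comm]

/-- for continuous `α`, the multistable measures built from the dyadic
discretisations `αₙ(x) = α(r2^{-n})` on `[r2^{-n},(r+1)2^{-n})` (i.e.
`αₙ(x) = α(⌊2ⁿx⌋/2ⁿ)`) converge in finite-dimensional distributions to `M_α`. -/
theorem multistable_measure_dyadic_approximation (a b : ℝ) (ha : 0 < a) (hab : a ≤ b)
    (hb : b ≤ 2)
    (α : ℝ → ℝ) (hαc : Continuous α) (hα : ∀ x, α x ∈ Set.Icc a b)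
    (m : ℕ) (A : Fin m → Set ℝ) (hA : ∀ j, MemE0 (A j))
    (μn : ℕ → Measure (Fin m → ℝ)) (hμnp : ∀ n, IsProbabilityMeasure (μn n))
    (hμnCF : ∀ (n : ℕ) (θ : Fin m → ℝ),
      ∫ y, Complex.exp (Complex.I * ((∑ j, θ j * y j : ℝ) : ℂ)) ∂(μn n) =
        ((Real.exp
          (-(∫ x : ℝ, |∑ j, θ j * (A j).indicator (fun _ => (1:ℝ)) x| ^
            α ((⌊x * 2 ^ n⌋ : ℝ) / 2 ^ n))) : ℝ) : ℂ))
    (μ : Measure (Fin m → ℝ)) (hμp : IsProbabilityMeasure μ)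
    (hμCF : ∀ θ : Fin m → ℝ,
      ∫ y, Complex.exp (Complex.I * ((∑ j, θ j * y j : ℝ) : ℂ)) ∂μ =
        ((Real.exp
          (-(∫ x : ℝ, |∑ j, θ j * (A j).indicator (fun _ => (1:ℝ)) x| ^ α x)) : ℝ) : ℂ)) :
    ∀ F : (Fin m → ℝ) →ᵇ ℝ,
      Tendsto (fun n => ∫ y, F y ∂(μn n)) atTop (𝓝 (∫ y, F y ∂μ)) := by
  intro F
  have hmeas : Measurable (WithLp.toLp 2 : (Fin m → ℝ) → EuclideanSpace ℝ (Fin m)) := by fun_prop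
  let P : ℕ → ProbabilityMeasure (EuclideanSpace ℝ (Fin m)) := fun n =>
    ⟨(μn n).map (WithLp.toLp 2), Measure.isProbabilityMeasure_map hmeas.aemeasurable⟩
  let Q : ProbabilityMeasure (EuclideanSpace ℝ (Fin m)) :=
    ⟨μ.map (WithLp.toLp 2), Measure.isProbabilityMeasure_map hmeas.aemeasurable⟩
  have hPQ : Tendsto P atTop (𝓝 Q) := by
    refine ProbabilityMeasure.tendsto_of_tendsto_charFun fun t => ?_
    change Tendsto (fun n => charFun ((μn n).map (WithLp.toLp 2)) t) atTop
      (𝓝 (charFun (μ.map (WithLp.toLp 2)) t))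
    simp only [charFun_map_toLp, hμnCF _ t, hμCF t]
    exact (Complex.continuous_ofReal.tendsto _).comp <| (Real.continuous_exp.tendsto _).comp
      (tendsto_integral_rpow_dyadic ha hαc hα hA t).neg
  let G : EuclideanSpace ℝ (Fin m) →ᵇ ℝ :=
    F.compContinuous ⟨WithLp.ofLp, PiLp.continuous_ofLp 2 _⟩
  have hG : ∀ ν : Measure (Fin m → ℝ), ∫ y, G y ∂(ν.map (WithLp.toLp 2)) = ∫ y, F y ∂ν :=
    fun ν => integral_map hmeas.aemeasurable G.continuous.aestronglyMeasurable
  have h := ProbabilityMeasure.tendsto_iff_forall_integral_tendsto.1 hPQ G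
  change Tendsto (fun n => ∫ y, G y ∂((μn n).map (WithLp.toLp 2))) atTop
    (𝓝 (∫ y, G y ∂(μ.map (WithLp.toLp 2)))) at h
  simpa only [hG] using h
end
end

section
/- Let 0 < a ≤ b ≤ 2 and let α : ℝ → [a,b] be continuous with |α(x+r) − α(x)| = o(1/|log r|) as r → 0⁺, uniformly for x in bounded intervals. Let u ∈ ℝ and let f₁,…,f_d ∈ F_{a,b} have compact support. For r > 0 let μ_r be the probability measure on ℝ^d with characteristic function θ ↦ exp(−∫_ℝ |Σ_{j=1}^d θ_j r^{−1/α(u)} f_j((x−u)/r)|^{α(x)} dx), and let μ₀ be the probability measure on ℝ^d with characteristic function θ ↦ exp(−∫_ℝ |Σ_{j=1}^d θ_j f_j(z)|^{α(u)} dz). Then μ_r converges weakly to μ₀ as r → 0⁺; that is, the rescaled multistable integrals (r^{−1/α(u)} ∫ f_j d(T_{u,r}^{#}M_α))_{j=1}^d converge in distribution to the α(u)-stable integrals (∫ f_j dM_{α(u)})_{j=1}^d. -/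
/-!
The limit is read off from characteristic functions by Lévy's continuity theorem. With
`g = ∑ θ_j f_j`, the substitution `x = u + r z` turns the exponent of the characteristic function
of `μ r` into `∫ r ^ ((α u - α (u + r z)) / α u) * |g z| ^ α (u + r z) dz`
(`integral_rescale`).

On the support of `g`, `z` stays bounded, and there the modulus condition on `α` gives
`|α (u + r z) - α u| * |log r| → 0` uniformly (`LogLittleO.eventually_le`). Hence the first factor
tends to `1` and is at most `e` for small `r`, while the second tends to `|g z| ^ α u` and is at
most `|g z|^{a,b}`, which is integrable because `F_{a,b}` is a vector space (`MemFab.sum`).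
Dominated convergence gives the convergence of the exponents (`tendsto_exponent`).
-/

open MeasureTheory Filter Set Topology ProbabilityTheory BoundedContinuousFunction

noncomputable section

/-- `|α(x+r) − α(x)| = o(1/log r)` as `r → 0⁺`, uniformly on bounded intervals. -/
def LogLittleO (α : ℝ → ℝ) : Prop :=
  ∀ R > (0:ℝ), ∀ ε > (0:ℝ), ∃ δ > (0:ℝ), ∀ r : ℝ, 0 < r → r < δ →
    ∀ x ∈ Set.Icc (-R) R, |α (x + r) - α x| * |Real.log r| ≤ ε

lemma pab_nonneg (a b s : ℝ) : 0 ≤ pab a b s :=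
  le_max_of_le_left (Real.rpow_nonneg (abs_nonneg s) a)

lemma rpow_le_pab {a b p : ℝ} (hp : p ∈ Icc a b) {s : ℝ} (hs : s ≠ 0) :
    |s| ^ p ≤ pab a b s := by
  have hs' : 0 < |s| := abs_pos.2 hs
  rcases le_total 1 |s| with h | h
  · exact le_max_of_le_right (Real.rpow_le_rpow_of_exponent_le h hp.2)
  · exact le_max_of_le_left (Real.rpow_le_rpow_of_exponent_ge hs' h hp.1)

lemma pab_mul_le (a b c s : ℝ) : pab a b (c * s) ≤ pab a b c * pab a b s := by
  have hs := abs_nonneg s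
  have hc := abs_nonneg c
  unfold pab
  rw [abs_mul, Real.mul_rpow hc hs, Real.mul_rpow hc hs]
  refine max_le ?_ ?_
  · exact mul_le_mul (le_max_left _ _) (le_max_left _ _) (by positivity) (pab_nonneg a b c)
  · exact mul_le_mul (le_max_right _ _) (le_max_right _ _) (by positivity) (pab_nonneg a b c)

lemma pab_mono {a b : ℝ} (ha : 0 < a) (hab : a ≤ b) {s t : ℝ} (h : |s| ≤ |t|) :
    pab a b s ≤ pab a b t :=
  max_le_max (Real.rpow_le_rpow (abs_nonneg s) h ha.le)
    (Real.rpow_le_rpow (abs_nonneg s) h (ha.le.trans hab))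

lemma pab_add_le {a b : ℝ} (ha : 0 < a) (hab : a ≤ b) (s t : ℝ) :
    pab a b (s + t) ≤ pab a b 2 * (pab a b s + pab a b t) := by
  have hst := abs_add_le s t
  have h2 := pab_nonneg a b 2
  have hs := pab_nonneg a b s
  have ht := pab_nonneg a b t
  have key : ∀ w : ℝ, |s + t| ≤ 2 * |w| → pab a b (s + t) ≤ pab a b 2 * pab a b w := fun w hw =>
    (pab_mono ha hab (by simpa [abs_mul] using hw)).trans (pab_mul_le a b 2 w)
  rcases le_total |s| |t| with h | h
  · nlinarith [key t (by linarith), mul_nonneg h2 hs]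
  · nlinarith [key s (by linarith), mul_nonneg h2 ht]

lemma measurable_pab (a b : ℝ) : Measurable (pab a b) := by
  unfold pab
  fun_prop

lemma MemFab.add {a b : ℝ} (ha : 0 < a) (hab : a ≤ b) {f g : ℝ → ℝ}
    (hf : MemFab a b f) (hg : MemFab a b g) : MemFab a b (fun x => f x + g x) := by
  have hm : Measurable (fun x => f x + g x) := hf.1.add hg.1
  refine ⟨hm, ((hf.2.add hg.2).const_mul (pab a b 2)).mono'
    ((measurable_pab a b).comp hm).aestronglyMeasurable (Eventually.of_forall fun x => ?_)⟩
  rw [Real.norm_of_nonneg (pab_nonneg _ _ _)]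
  exact pab_add_le ha hab _ _

lemma MemFab.const_mul {a b : ℝ} {f : ℝ → ℝ} (hf : MemFab a b f) (c : ℝ) :
    MemFab a b (fun x => c * f x) := by
  have hm : Measurable (fun x => c * f x) := hf.1.const_mul c
  refine ⟨hm, (hf.2.const_mul (pab a b c)).mono'
    ((measurable_pab a b).comp hm).aestronglyMeasurable (Eventually.of_forall fun x => ?_)⟩
  rw [Real.norm_of_nonneg (pab_nonneg _ _ _)]
  exact pab_mul_le _ _ _ _

lemma MemFab.sum {a b : ℝ} (ha : 0 < a) (hab : a ≤ b) {ι : Type*} (s : Finset ι)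
    {f : ι → ℝ → ℝ} (hf : ∀ j, MemFab a b (f j)) : MemFab a b (fun x => ∑ j ∈ s, f j x) := by
  classical
  induction s using Finset.induction_on with
  | empty =>
    have hb : b ≠ 0 := (ha.trans_le hab).ne'
    refine ⟨by simp, ?_⟩
    simp [pab, Real.zero_rpow ha.ne', Real.zero_rpow hb]
  | insert j s hj ih =>
    simp only [Finset.sum_insert hj]
    exact (hf j).add ha hab ih

/-- The modulus condition compares increments over `r |z|` with `log (r |z|)`. For `|z| ≤ K` and
small `r` one has `(r |z|)² ≤ r`, so that `log (r |z|)` may be replaced by `log r`. -/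
lemma LogLittleO.eventually_le {α : ℝ → ℝ} (hlog : LogLittleO α) (u K : ℝ) {ε : ℝ} (hε : 0 < ε) :
    ∀ᶠ r in 𝓝[>] (0:ℝ), ∀ z : ℝ, |z| ≤ K → |α (u + r * z) - α u| * |Real.log r| ≤ ε := by
  obtain ⟨δ, hδ, H⟩ := hlog (|u| + 1) (by positivity) (ε / 2) (by positivity)
  set L := max K 1 with hL
  have hL1 : 1 ≤ L := le_max_right _ _
  have hLL : L ≤ L ^ 2 := by nlinarith
  have hpos : 0 < min δ 1 / L ^ 2 := by positivity
  filter_upwards [Ioo_mem_nhdsGT hpos] with r hr z hz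
  obtain ⟨hr0, hr1⟩ := hr
  rw [lt_div_iff₀ (by positivity)] at hr1
  have hrδ : r * L ^ 2 < δ := hr1.trans_le (min_le_left _ _)
  have hr1 : r * L ^ 2 < 1 := hr1.trans_le (min_le_right _ _)
  have hzL : |z| ≤ L := hz.trans (le_max_left _ _)
  rcases eq_or_ne z 0 with rfl | hz0
  · simpa using hε.le
  set s := r * |z| with hs
  have hzpos : 0 < |z| := abs_pos.2 hz0
  have hs0 : 0 < s := by positivity
  have hsL : s ≤ r * L ^ 2 := mul_le_mul_of_nonneg_left (hzL.trans hLL) hr0.le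
  have hs2 : s ^ 2 ≤ r := by
    have h1 : |z| ^ 2 ≤ L ^ 2 := by gcongr
    have h2 : r * |z| ^ 2 ≤ 1 := (mul_le_mul_of_nonneg_left h1 hr0.le).trans hr1.le
    calc s ^ 2 = r * (r * |z| ^ 2) := by rw [hs]; ring
      _ ≤ r * 1 := by gcongr
      _ = r := mul_one r
  have hlogs : |Real.log r| ≤ 2 * |Real.log s| := by
    have h1 : 2 * Real.log s ≤ Real.log r := by
      have := Real.log_le_log (by positivity) hs2
      rwa [Real.log_pow] at this
    have h2 : Real.log r ≤ 0 := Real.log_nonpos hr0.le (by nlinarith)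
    rw [abs_of_nonpos h2, abs_of_nonpos (by linarith)]
    linarith
  have hu := abs_le.1 (le_refl |u|)
  have hinc : |α (u + r * z) - α u| * |Real.log s| ≤ ε / 2 := by
    rcases le_total 0 z with h | h
    · have := H s hs0 (hsL.trans_lt hrδ) u ⟨by linarith, by linarith⟩
      rwa [hs, abs_of_nonneg h] at this ⊢
    · have := H s hs0 (hsL.trans_lt hrδ) (u - s) ⟨by linarith, by linarith⟩
      rw [sub_add_cancel, abs_sub_comm] at this
      have e : u + r * z = u - s := by rw [hs, abs_of_nonpos h]; ring
      rwa [e]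
  nlinarith [abs_nonneg (α (u + r * z) - α u)]

lemma integral_rescale {α : ℝ → ℝ} {u : ℝ} (hu : 0 < α u) (g : ℝ → ℝ) {r : ℝ} (hr : 0 < r) :
    ∫ x : ℝ, |r ^ (-(1 / α u)) * g ((x - u) / r)| ^ α x =
      ∫ z : ℝ, r ^ ((α u - α (u + r * z)) / α u) * |g z| ^ α (u + r * z) := by
  rw [← integral_add_left_eq_self (μ := volume)
    (fun x : ℝ => |r ^ (-(1 / α u)) * g ((x - u) / r)| ^ α x) u]
  have h := Measure.integral_comp_mul_left
    (fun y : ℝ => |r ^ (-(1 / α u)) * g ((u + y - u) / r)| ^ α (u + y)) r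
  rw [abs_of_pos (inv_pos.2 hr), smul_eq_mul, eq_inv_mul_iff_mul_eq₀ hr.ne'] at h
  rw [← h, ← integral_const_mul]
  refine integral_congr_ae (Eventually.of_forall fun z => ?_)
  have hz : (u + r * z - u) / r = z := by field_simp; ring
  have hpos : 0 < r ^ (-(1 / α u)) := Real.rpow_pos_of_pos hr _
  simp only [hz]
  rw [abs_mul, abs_of_pos hpos, Real.mul_rpow hpos.le (abs_nonneg _), ← Real.rpow_mul hr.le,
    ← mul_assoc]
  congr 1
  nth_rewrite 1 [← Real.rpow_one r]
  rw [← Real.rpow_add hr]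
  congr 1
  field_simp
  ring

lemma tendsto_exponent {a b : ℝ} (ha : 0 < a) {α : ℝ → ℝ} (hαc : Continuous α)
    (hα : ∀ x, α x ∈ Icc a b) (hlog : LogLittleO α) (u : ℝ) {g : ℝ → ℝ} (hg : MemFab a b g)
    {K : ℝ} (hK : ∀ z, g z ≠ 0 → |z| ≤ K) :
    Tendsto (fun r : ℝ => ∫ x : ℝ, |r ^ (-(1 / α u)) * g ((x - u) / r)| ^ α x) (𝓝[>] (0:ℝ))
      (𝓝 (∫ z : ℝ, |g z| ^ α u)) := by
  have hpos : ∀ x, 0 < α x := fun x => ha.trans_le (hα x).1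
  have hr0 : ∀ᶠ r in 𝓝[>] (0:ℝ), 0 < r := self_mem_nhdsWithin
  refine Tendsto.congr' (hr0.mono fun r hr => (integral_rescale (hpos u) g hr).symm) ?_
  have hgm := hg.1
  -- The logarithm of the factor `r ^ ((α u - α (u + r z)) / α u)` in absolute value.
  have hexp : ∀ {r z ε : ℝ}, |α (u + r * z) - α u| * |Real.log r| ≤ ε →
      |Real.log r * ((α u - α (u + r * z)) / α u)| ≤ ε / a := by
    intro r z ε h
    rw [abs_mul, abs_div, abs_of_pos (hpos u), abs_sub_comm, mul_div_assoc', mul_comm]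
    exact div_le_div₀ ((by positivity : (0:ℝ) ≤ _).trans h) h ha (hα u).1
  refine tendsto_integral_filter_of_dominated_convergence
    (fun z => Real.exp 1 * pab a b (g z)) ?_ ?_ (hg.2.const_mul _) ?_
  · refine Eventually.of_forall fun r => Measurable.aestronglyMeasurable ?_
    have := hαc.measurable
    fun_prop
  · filter_upwards [hr0, hlog.eventually_le u K ha] with r hr H
    refine Eventually.of_forall fun z => ?_
    rw [Real.norm_of_nonneg (by positivity)]
    rcases eq_or_ne (g z) 0 with h0 | h0
    · rw [h0, abs_zero, Real.zero_rpow (hpos _).ne', mul_zero]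
      exact mul_nonneg (Real.exp_pos 1).le (pab_nonneg _ _ _)
    · refine mul_le_mul ?_ (rpow_le_pab (hα _) h0) (by positivity) (Real.exp_pos 1).le
      rw [Real.rpow_def_of_pos hr, Real.exp_le_exp]
      have := hexp (H z (hK z h0))
      rw [div_self ha.ne'] at this
      exact (abs_le.1 this).2
  · refine Eventually.of_forall fun z => ?_
    rcases eq_or_ne (g z) 0 with h0 | h0
    · simp [h0, Real.zero_rpow (hpos _).ne']
    have hlim : Tendsto (fun r : ℝ => Real.log r * ((α u - α (u + r * z)) / α u)) (𝓝[>] (0:ℝ))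
        (𝓝 0) := by
      rw [Metric.tendsto_nhds]
      intro ε hε
      filter_upwards [hlog.eventually_le u K (show 0 < a * (ε / 2) by positivity)] with r H
      have := hexp (H z (hK z h0))
      rw [mul_div_cancel_left₀ _ ha.ne'] at this
      rw [Real.dist_eq, sub_zero]
      linarith
    have hfac : Tendsto (fun r : ℝ => r ^ ((α u - α (u + r * z)) / α u)) (𝓝[>] (0:ℝ)) (𝓝 1) := by
      have h := (Real.continuous_exp.tendsto 0).comp hlim
      rw [Real.exp_zero] at h
      exact h.congr' (hr0.mono fun r hr => (Real.rpow_def_of_pos hr _).symm)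
    have hpow : Tendsto (fun r : ℝ => |g z| ^ α (u + r * z)) (𝓝[>] (0:ℝ)) (𝓝 (|g z| ^ α u)) := by
      have hc : Continuous fun r : ℝ => |g z| ^ α (u + r * z) :=
        Continuous.rpow continuous_const (by fun_prop) fun _ => Or.inl (abs_ne_zero.2 h0)
      have := hc.tendsto 0
      simp only [zero_mul, add_zero] at this
      exact this.mono_left nhdsWithin_le_nhds
    simpa using hfac.mul hpow

/-- Lévy's continuity theorem for `ℝ^d` realised as `Fin d → ℝ`, along a sequence. -/
lemma tendsto_integral_of_tendsto_charFun {d : ℕ} (ν : ℕ → Measure (Fin d → ℝ))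
    (hν : ∀ n, IsProbabilityMeasure (ν n)) (ν₀ : Measure (Fin d → ℝ))
    (hν₀ : IsProbabilityMeasure ν₀)
    (h : ∀ θ : Fin d → ℝ, Tendsto
      (fun n => ∫ y, Complex.exp (Complex.I * ((∑ j, θ j * y j : ℝ) : ℂ)) ∂(ν n)) atTop
      (𝓝 (∫ y, Complex.exp (Complex.I * ((∑ j, θ j * y j : ℝ) : ℂ)) ∂ν₀)))
    (F : (Fin d → ℝ) →ᵇ ℝ) :
    Tendsto (fun n => ∫ y, F y ∂(ν n)) atTop (𝓝 (∫ y, F y ∂ν₀)) := by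
  have hc : Continuous (WithLp.toLp 2 : (Fin d → ℝ) → EuclideanSpace ℝ (Fin d)) :=
    PiLp.continuous_toLp 2 _
  have hm := hc.measurable
  have hchar : ∀ (m : Measure (Fin d → ℝ)) (t : EuclideanSpace ℝ (Fin d)),
      charFun (m.map (WithLp.toLp 2)) t =
        ∫ y, Complex.exp (Complex.I * ((∑ j, t j * y j : ℝ) : ℂ)) ∂m := by
    intro m t
    rw [charFun_apply, integral_map hm.aemeasurable (by fun_prop)]
    refine integral_congr_ae (Eventually.of_forall fun y => ?_)
    simp [PiLp.inner_apply, mul_comm]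
  let P : ℕ → ProbabilityMeasure (EuclideanSpace ℝ (Fin d)) := fun n =>
    ⟨(ν n).map (WithLp.toLp 2), Measure.isProbabilityMeasure_map hm.aemeasurable⟩
  let P₀ : ProbabilityMeasure (EuclideanSpace ℝ (Fin d)) :=
    ⟨ν₀.map (WithLp.toLp 2), Measure.isProbabilityMeasure_map hm.aemeasurable⟩
  have hP : Tendsto P atTop (𝓝 P₀) := by
    refine ProbabilityMeasure.tendsto_iff_tendsto_charFun.2 fun t => ?_
    change Tendsto (fun n => charFun ((ν n).map (WithLp.toLp 2)) t) atTop
      (𝓝 (charFun (ν₀.map (WithLp.toLp 2)) t))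
    simp only [hchar]
    exact h t
  let G : EuclideanSpace ℝ (Fin d) →ᵇ ℝ :=
    F.compContinuous ⟨WithLp.ofLp, PiLp.continuous_ofLp 2 _⟩
  have hG : ∀ m : Measure (Fin d → ℝ), ∫ y, G y ∂(m.map (WithLp.toLp 2)) = ∫ y, F y ∂m := by
    intro m
    rw [integral_map hm.aemeasurable G.continuous.aestronglyMeasurable]
    rfl
  have := (ProbabilityMeasure.tendsto_iff_forall_integral_tendsto.1 hP) G
  change Tendsto (fun n => ∫ y, G y ∂((ν n).map (WithLp.toLp 2))) atTop
      (𝓝 (∫ y, G y ∂(ν₀.map (WithLp.toLp 2)))) at this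
  simpa only [hG] using this

/-- locally, a scaled α(x)-multistable measure looks like an α(u)-stable
measure: the rescaled multistable integrals `r^{-1/α(u)} ∫ f_j d(T_{u,r}^# M_α)`
converge in distribution to the α(u)-stable integrals `∫ f_j dM_{α(u)}` as `r → 0⁺`. -/
theorem multistable_measure_local_form (a b : ℝ) (ha : 0 < a) (hab : a ≤ b) (hb : b ≤ 2)
    (α : ℝ → ℝ) (hαc : Continuous α) (hα : ∀ x, α x ∈ Set.Icc a b)
    (hlog : LogLittleO α) (u : ℝ) (d : ℕ)
    (f : Fin d → ℝ → ℝ) (hf : ∀ j, MemFab a b (f j)) (hfc : ∀ j, HasCompactSupport (f j))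
    (μ : ℝ → Measure (Fin d → ℝ)) (hμp : ∀ r > (0:ℝ), IsProbabilityMeasure (μ r))
    (hμCF : ∀ r > (0:ℝ), ∀ θ : Fin d → ℝ,
      ∫ y, Complex.exp (Complex.I * ((∑ j, θ j * y j : ℝ) : ℂ)) ∂(μ r) =
        ((Real.exp
          (-(∫ x : ℝ, |∑ j, θ j * r ^ (-(1 / α u)) * f j ((x - u) / r)| ^ α x)) : ℝ) : ℂ))
    (μ₀ : Measure (Fin d → ℝ)) (hμ₀p : IsProbabilityMeasure μ₀)
    (hμ₀CF : ∀ θ : Fin d → ℝ,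
      ∫ y, Complex.exp (Complex.I * ((∑ j, θ j * y j : ℝ) : ℂ)) ∂μ₀ =
        ((Real.exp (-(∫ z : ℝ, |∑ j, θ j * f j z| ^ α u)) : ℝ) : ℂ)) :
    ∀ F : (Fin d → ℝ) →ᵇ ℝ,
      Tendsto (fun r => ∫ y, F y ∂(μ r)) (𝓝[>] (0:ℝ)) (𝓝 (∫ y, F y ∂μ₀)) := by
  intro F
  have hr0 : ∀ᶠ r in 𝓝[>] (0:ℝ), 0 < r := self_mem_nhdsWithin
  obtain ⟨K, hK⟩ : ∃ K : ℝ, ∀ j z, f j z ≠ 0 → |z| ≤ K := by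
    have hbdd : Bornology.IsBounded (⋃ j, tsupport (f j)) :=
      (isCompact_iUnion fun j => hfc j).isBounded
    obtain ⟨K, hK⟩ := hbdd.exists_norm_le
    exact ⟨K, fun j z hz => hK z (mem_iUnion.2 ⟨j, subset_tsupport _ hz⟩)⟩
  have hCF : ∀ θ : Fin d → ℝ, Tendsto
      (fun r => ∫ y, Complex.exp (Complex.I * ((∑ j, θ j * y j : ℝ) : ℂ)) ∂(μ r)) (𝓝[>] (0:ℝ))
      (𝓝 (∫ y, Complex.exp (Complex.I * ((∑ j, θ j * y j : ℝ) : ℂ)) ∂μ₀)) := by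
    intro θ
    have hg : MemFab a b (fun z => ∑ j, θ j * f j z) :=
      MemFab.sum ha hab _ fun j => (hf j).const_mul (θ j)
    have hgK : ∀ z, ∑ j, θ j * f j z ≠ 0 → |z| ≤ K := by
      intro z hz
      obtain ⟨j, -, hj⟩ := Finset.exists_ne_zero_of_sum_ne_zero hz
      exact hK j z (right_ne_zero_of_mul hj)
    have hlim := tendsto_exponent ha hαc hα hlog u hg hgK
    rw [hμ₀CF θ]
    have hlim' := (Complex.continuous_ofReal.tendsto _).comp
      ((Real.continuous_exp.tendsto _).comp hlim.neg)
    refine hlim'.congr' (hr0.mono fun r hr => ?_)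
    simp only [hμCF r hr θ]
    have e : ∀ x, ∑ j, θ j * r ^ (-(1 / α u)) * f j ((x - u) / r) =
        r ^ (-(1 / α u)) * ∑ j, θ j * f j ((x - u) / r) := by
      intro x
      rw [Finset.mul_sum]
      exact Finset.sum_congr rfl fun j _ => by ring
    simp only [e, Function.comp_apply]
  refine tendsto_of_seq_tendsto fun s hs => ?_
  -- The measures `μ r` are unconstrained for `r ≤ 0`, so the sequence is shifted until positive.
  obtain ⟨N, hN⟩ := eventually_atTop.1 (hs.eventually hr0)
  have hsN := (tendsto_add_atTop_iff_nat N).2 hs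
  refine (tendsto_add_atTop_iff_nat N).1 ?_
  exact tendsto_integral_of_tendsto_charFun (fun n => μ (s (n + N)))
    (fun n => hμp _ (hN _ (Nat.le_add_left N n))) μ₀ hμ₀p (fun θ => (hCF θ).comp hsN) F
end
end
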